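/- arXiv:1401.0041 — 3 statements merged into one kernel-verified Lean document; each statement's English description precedes it below -/
import Mathlib

section
/- If a locally connected continuum X contained in the Euclidean plane ℝ² does not separate the plane (i.e., ℝ² ∖ X is connected), then X has the fixed point property. -/
/-- A space has the fixed point property: every continuous self-map has a fixed point. -/
def HasFPP (Y : Type*) [TopologicalSpace Y] : Prop :=
  ∀ f : Y → Y, Continuous f → ∃ x, f x = x

/-- A space has the periodic point property: every continuous self-map has a periodic point. -/
def HasPPP (Y : Type*) [TopologicalSpace Y] : Prop :=
  ∀ f : Y → Y, Continuous f → ∃ x, ∃ n : ℕ, 1 ≤ n ∧ f^[n] x = x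

/-- Local fixed point property: there is an open basis whose members have closures with FPP. -/
def HasLFPP (Y : Type*) [TopologicalSpace Y] : Prop :=
  ∃ 𝓑 : Set (Set Y), TopologicalSpace.IsTopologicalBasis 𝓑 ∧
    ∀ B ∈ 𝓑, HasFPP ↥(closure B)

/-- Weak local fixed point property. -/
def HasWLFPP (Y : Type*) [TopologicalSpace Y] : Prop :=
  ∃ 𝓑 : Set (Set Y), TopologicalSpace.IsTopologicalBasis 𝓑 ∧
    ∀ B ∈ 𝓑, ∀ f : Y → Y, Continuous f → f '' closure B ⊆ B → ∃ x ∈ B, f x = x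

/-- Local periodic point property. -/
def HasLPPP (Y : Type*) [TopologicalSpace Y] : Prop :=
  ∃ 𝓑 : Set (Set Y), TopologicalSpace.IsTopologicalBasis 𝓑 ∧
    ∀ B ∈ 𝓑, HasPPP ↥(closure B)

/-- Weak local periodic point property. -/
def HasWLPPP (Y : Type*) [TopologicalSpace Y] : Prop :=
  ∃ 𝓑 : Set (Set Y), TopologicalSpace.IsTopologicalBasis 𝓑 ∧
    ∀ B ∈ 𝓑, ∀ f : Y → Y, Continuous f → f '' closure B ⊆ B →
      ∃ x ∈ B, ∃ n : ℕ, 1 ≤ n ∧ f^[n] x = x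

/-- A subset is a simple closed curve if it is homeomorphic to the unit circle. -/
def IsSimpleClosedCurve {α : Type*} [TopologicalSpace α] (S : Set α) : Prop :=
  Nonempty (↥S ≃ₜ ↥(Metric.sphere (0 : EuclideanSpace ℝ (Fin 2)) 1))

/-- Covering dimension at most `n`: every finite open cover admits an open shrinking
of order at most `n + 1`. -/
def CoveringDimLE (Y : Type*) [TopologicalSpace Y] (n : ℕ) : Prop :=
  ∀ (ι : Type) [Finite ι] (U : ι → Set Y), (∀ i, IsOpen (U i)) → (⋃ i, U i) = Set.univ →
    ∃ V : ι → Set Y, (∀ i, IsOpen (V i)) ∧ (∀ i, V i ⊆ U i) ∧ (⋃ i, V i) = Set.univ ∧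
      ∀ y : Y, {i | y ∈ V i}.ncard ≤ n + 1

/-- A dendrite: a locally connected (metric) continuum containing no simple closed curve. -/
def IsDendrite {α : Type*} [TopologicalSpace α] (D : Set α) : Prop :=
  IsCompact D ∧ IsConnected D ∧ LocallyConnectedSpace ↥D ∧ ∀ S ⊆ D, ¬ IsSimpleClosedCurve S

/-- A local dendrite: every point has a closed neighborhood which is a dendrite. -/
def IsLocalDendrite (Y : Type*) [TopologicalSpace Y] : Prop :=
  ∀ y : Y, ∃ N : Set Y, N ∈ nhds y ∧ IsClosed N ∧ IsDendrite N

/-!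
Suppose that a continuous `f : X → X` has no fixed point. The displacement `x - z` then has a
continuous logarithm locally: near `(f x, x)` because it is nonzero there, and on `X × Q`, for a
convex `Q` disjoint from `X`, because `X` does not separate the plane. Let `g z` be a point of `X`
nearest to `z`, and let `φ = f ∘ g`; `φ` need not be continuous, but by local connectedness
nearby values of `φ` can be joined by small connected subsets of `X`, along which the logarithm of
`x - z` has a well-defined increment. These increments behave like a closed discrete 1-form on the
plane, so their sum around a large circle vanishes. On the other hand that sum is `2πi`, because
far from `X` the displacement `φ z - z` winds around the origin exactly as `-z` does.
-/

open Complex Filter Function Metric Set Topology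

section LogBranch

variable {α β : Type*} [TopologicalSpace α] [TopologicalSpace β] {L M u v : α → ℂ} {S T : Set α}

/-- `L` is a continuous branch of `log u` on `S`. -/
def IsLogBranchOn (L u : α → ℂ) (S : Set α) : Prop :=
  ContinuousOn L S ∧ ∀ x ∈ S, exp (L x) = u x

/-- The increment from `a` to `b` of a continuous branch of `log u` on `S`. It does not depend on
the branch when `S` is preconnected, and has a junk value when there is no branch. -/
noncomputable def logIncrement (u : α → ℂ) (S : Set α) (a b : α) : ℂ :=
  let L := Classical.epsilon fun L => IsLogBranchOn L u S
  L b - L a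

theorem isLogBranchOn_const {c : ℂ} (hc : c ≠ 0) :
    IsLogBranchOn (fun _ : α => log c) (fun _ => c) S :=
  ⟨continuousOn_const, fun _ _ => exp_log hc⟩

namespace IsLogBranchOn

theorem ne_zero (hL : IsLogBranchOn L u S) {x : α} (hx : x ∈ S) : u x ≠ 0 :=
  hL.2 x hx ▸ exp_ne_zero _

theorem continuousOn (hL : IsLogBranchOn L u S) : ContinuousOn u S :=
  hL.1.cexp.congr fun x hx => (hL.2 x hx).symm

theorem mono (hL : IsLogBranchOn L u T) (hST : S ⊆ T) : IsLogBranchOn L u S :=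
  ⟨hL.1.mono hST, fun x hx => hL.2 x (hST hx)⟩

theorem comp {g : β → α} {R : Set β} (hL : IsLogBranchOn L u S) (hg : ContinuousOn g R)
    (hgS : MapsTo g R S) : IsLogBranchOn (L ∘ g) (u ∘ g) R :=
  ⟨hL.1.comp hg hgS, fun x hx => hL.2 (g x) (hgS hx)⟩

theorem add_log_div (hL : IsLogBranchOn L u S) (hv : ContinuousOn v S)
    (h : ∀ x ∈ S, v x / u x ∈ slitPlane) :
    IsLogBranchOn (fun x => L x + log (v x / u x)) v S := by
  refine ⟨hL.1.add ((hv.div hL.continuousOn fun x hx => hL.ne_zero hx).clog h), fun x hx => ?_⟩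
  rw [exp_add, hL.2 x hx, exp_log (slitPlane_ne_zero (h x hx)), mul_div_cancel₀ _ (hL.ne_zero hx)]

theorem sub_eq_sub (hS : IsPreconnected S) (hL : IsLogBranchOn L u S) (hM : IsLogBranchOn M u S)
    {a b : α} (ha : a ∈ S) (hb : b ∈ S) : L b - L a = M b - M a := by
  have hexp : exp (L a - M a) = 1 := by
    rw [exp_sub, hL.2 a ha, hM.2 a ha, div_self (hM.ne_zero ha)]
  have hLM : EqOn L (fun x => M x + (L a - M a)) S :=
    isCoveringMap_exp.eqOn_of_comp_eqOn hS hL.1 (hM.1.add continuousOn_const)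
      (fun x hx => Subtype.ext <| by simp [exp_add, hexp, hL.2 x hx, hM.2 x hx]) ha (by ring)
  linear_combination hLM hb

theorem logIncrement_eq (hL : IsLogBranchOn L u S) (hS : IsPreconnected S) {a b : α}
    (ha : a ∈ S) (hb : b ∈ S) : logIncrement u S a b = L b - L a :=
  sub_eq_sub hS (Classical.epsilon_spec (p := fun L => IsLogBranchOn L u S) ⟨L, hL⟩) hL ha hb

end IsLogBranchOn

end LogBranch

section NonseparatingSet

theorem sub_div_sub_mem_slitPlane {x z w : ℂ} (h : x ∉ segment ℝ z w) :
    (x - w) / (x - z) ∈ slitPlane := by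
  contrapose! h
  obtain ⟨hre, him⟩ : ((x - w) / (x - z)).re ≤ 0 ∧ ((x - w) / (x - z)).im = 0 := by
    simpa [mem_slitPlane_iff] using h
  rcases eq_or_ne x z with rfl | hxz
  · exact left_mem_segment ℝ x w
  have hquot : x - w = ((x - w) / (x - z)).re * (x - z) := by
    rw [← div_eq_iff (sub_ne_zero.2 hxz)]
    exact Complex.ext (by simp) (by simp [him])
  have hsmul : w - x = (-((x - w) / (x - z)).re) • (x - z) := by
    rw [real_smul, ofReal_neg]
    linear_combination -hquot
  rw [mem_segment_iff_sameRay, hsmul]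
  exact SameRay.sameRay_nonneg_smul_right _ (neg_nonneg.2 hre)

variable {X : Set ℂ}

theorem IsLogBranchOn.exists_sub_of_disjoint_segment {L : ℂ → ℂ} {z w : ℂ}
    (hL : IsLogBranchOn L (fun x => x - z) X) (h : Disjoint (segment ℝ z w) X) :
    ∃ M, IsLogBranchOn M (fun x => x - w) X :=
  ⟨_, hL.add_log_div (by fun_prop) fun _ hx => sub_div_sub_mem_slitPlane (disjoint_right.1 h hx)⟩

theorem isLogBranchOn_sub_of_subset_ball {w : ℂ} (hX : X ⊆ ball 0 ‖w‖) :
    ∃ L, IsLogBranchOn L (fun x => x - w) X := by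
  rcases X.eq_empty_or_nonempty with rfl | ⟨y, hy⟩
  · exact ⟨0, continuousOn_empty _, by simp⟩
  have hw : w ≠ 0 := norm_pos_iff.1 (pos_of_mem_ball (hX hy))
  refine ⟨_, (isLogBranchOn_const (neg_ne_zero.2 hw)).add_log_div (by fun_prop) fun x hx => ?_⟩
  have hquot : (x - w) / -w = 1 + -(x / w) := by field_simp; ring
  rw [hquot]
  refine mem_slitPlane_of_norm_lt_one ?_
  rw [norm_neg, norm_div, div_lt_one (norm_pos_iff.2 hw)]
  exact mem_ball_zero_iff.1 (hX hx)

/-- The easy half of Eilenberg's criterion for a compact plane set not to separate the plane. -/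
theorem exists_isLogBranchOn_sub (hX : IsCompact X) (hXc : IsPreconnected Xᶜ) {z : ℂ}
    (hz : z ∉ X) : ∃ L, IsLogBranchOn L (fun x => x - z) X := by
  obtain ⟨R, hR, hXR⟩ := hX.isBounded.subset_ball_lt 0 0
  have hnorm : ‖(R : ℂ)‖ = R := by simp [abs_of_pos hR]
  have hRX : (R : ℂ) ∈ Xᶜ := fun h => (mem_ball_zero_iff.1 (hXR h)).ne hnorm
  refine hXc.induction₂'
    (fun z w => (∃ L, IsLogBranchOn L (fun x => x - z) X) →
      ∃ L, IsLogBranchOn L (fun x => x - w) X)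
    (fun a ha => ?_) (fun _ _ _ _ _ _ hab hbc => hbc ∘ hab) hRX hz
    (isLogBranchOn_sub_of_subset_ball (hnorm.symm ▸ hXR))
  obtain ⟨r, hr, hball⟩ := Metric.isOpen_iff.1 hX.isClosed.isOpen_compl a ha
  filter_upwards [mem_nhdsWithin_of_mem_nhds (ball_mem_nhds a hr)] with b hb
  have hdisj : Disjoint (segment ℝ a b) X := disjoint_left.2 fun y hy =>
    hball ((convex_ball a r).segment_subset (mem_ball_self hr) hb hy)
  exact ⟨fun ⟨_, hL⟩ => hL.exists_sub_of_disjoint_segment hdisj,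
    fun ⟨_, hL⟩ => hL.exists_sub_of_disjoint_segment (segment_symm ℝ a b ▸ hdisj)⟩

end NonseparatingSet

section LocallyExact

variable {E A : Type*} [AddCommGroup A] {d : E → E → A}

/-- `d`, viewed as a discrete 1-form assigning a value to every ordered pair of points, is the
coboundary of some function on `U`. -/
def IsExactOn (d : E → E → A) (U : Set E) : Prop :=
  ∃ G : E → A, ∀ x ∈ U, ∀ y ∈ U, d x y = G y - G x

/-- `d` is the coboundary of a function near every point; for a discrete 1-form this plays the role
of being closed. -/
def IsLocallyExact [TopologicalSpace E] (d : E → E → A) : Prop :=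
  ∀ x, ∃ U ∈ 𝓝 x, IsExactOn d U

/-- The Riemann sum of the discrete 1-form `d` along `γ` restricted to `[0, 1]`, for the partition
into `N` equal intervals. -/
noncomputable def pathSum (d : E → E → A) (γ : ℝ → E) (N : ℕ) : A :=
  ∑ i ∈ Finset.range N, d (γ (i / N)) (γ ((i + 1 : ℕ) / N))

theorem sum_loop_eq_sum_loop {x y : ℕ → E} {N : ℕ} (hx : x N = x 0) (hy : y N = y 0)
    (h : ∀ i < N, IsExactOn d {x i, x (i + 1), y i, y (i + 1)}) :
    ∑ i ∈ Finset.range N, d (x i) (x (i + 1)) = ∑ i ∈ Finset.range N, d (y i) (y (i + 1)) := by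
  have hcell : ∀ i ∈ Finset.range N, d (x i) (x (i + 1)) - d (y i) (y (i + 1)) =
      d (x i) (y i) - d (x (i + 1)) (y (i + 1)) := by
    intro i hi
    obtain ⟨G, hG⟩ := h i (Finset.mem_range.1 hi)
    rw [hG _ (by simp) _ (by simp), hG _ (by simp) _ (by simp), hG _ (by simp) _ (by simp),
      hG _ (by simp) _ (by simp)]
    abel
  rw [← sub_eq_zero, ← Finset.sum_sub_distrib, Finset.sum_congr rfl hcell,
    Finset.sum_range_sub' fun i => d (x i) (y i), hx, hy, sub_self]

theorem IsExactOn.mono {U V : Set E} (hV : IsExactOn d V) (hUV : U ⊆ V) : IsExactOn d U :=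
  let ⟨G, hG⟩ := hV
  ⟨G, fun x hx y hy => hG x (hUV hx) y (hUV hy)⟩

namespace IsLocallyExact

variable [TopologicalSpace E]

theorem self_eq_zero (hd : IsLocallyExact d) (x : E) : d x x = 0 := by
  obtain ⟨U, hU, G, hG⟩ := hd x
  rw [hG x (mem_of_mem_nhds hU) x (mem_of_mem_nhds hU), sub_self]

theorem pathSum_const (hd : IsLocallyExact d) (x : E) (N : ℕ) : pathSum d (fun _ => x) N = 0 :=
  Finset.sum_eq_zero fun _ _ => hd.self_eq_zero x

theorem exists_isExactOn_image_ball {P : Type*} [PseudoMetricSpace P] {h : P → E} {K : Set P}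
    (hd : IsLocallyExact d) (hh : Continuous h) (hK : IsCompact K) :
    ∃ δ > 0, ∀ p ∈ K, IsExactOn d (h '' ball p δ) := by
  choose U hU hUd using hd
  obtain ⟨δ, hδ, hball⟩ := lebesgue_number_lemma_of_metric (c := fun x => h ⁻¹' interior (U x)) hK
    (fun x => isOpen_interior.preimage hh)
    fun p _ => mem_iUnion.2 ⟨h p, mem_interior_iff_mem_nhds.2 (hU (h p))⟩
  refine ⟨δ, hδ, fun p hp => ?_⟩
  obtain ⟨x, hx⟩ := hball p hp
  exact (hUd x).mono ((image_subset_iff.2 hx).trans interior_subset)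

theorem eventually_pathSum_eq_of_homotopy {h : ℝ → ℝ → E} (hd : IsLocallyExact d)
    (hh : Continuous (uncurry h)) (hloop : ∀ s, h s 1 = h s 0) :
    ∀ᶠ N in atTop, pathSum d (h 0) N = pathSum d (h 1) N := by
  obtain ⟨δ, hδ, hball⟩ :=
    hd.exists_isExactOn_image_ball hh (K := Icc 0 1 ×ˢ Icc 0 1) (isCompact_Icc.prod isCompact_Icc)
  filter_upwards [tendsto_one_div_atTop_nhds_zero_nat.eventually_lt_const hδ, eventually_gt_atTop 0]
    with N hNδ hN
  have hN' : (0 : ℝ) < N := Nat.cast_pos.2 hN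
  have mem_Icc_div : ∀ i < N, (i / N : ℝ) ∈ Icc (0 : ℝ) 1 := fun i hi =>
    ⟨by positivity, (div_le_one hN').2 (by exact_mod_cast hi.le)⟩
  have dist_succ_div : ∀ i : ℕ, dist ((i + 1 : ℕ) / N : ℝ) (i / N) < δ := fun i => by
    rwa [Real.dist_eq, Nat.cast_succ, ← sub_div, add_sub_cancel_left, abs_of_pos (by positivity)]
  have hrow : ∀ j < N, pathSum d (h (j / N)) N = pathSum d (h ((j + 1 : ℕ) / N)) N := by
    intro j hj
    refine sum_loop_eq_sum_loop (x := fun i => h (j / N) (i / N))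
      (y := fun i => h ((j + 1 : ℕ) / N) (i / N)) ?_ ?_ fun i hi => ?_
    · simp [div_self hN'.ne', hloop]
    · simp [div_self hN'.ne', hloop]
    · refine (hball (j / N, i / N) ⟨mem_Icc_div j hj, mem_Icc_div i hi⟩).mono ?_
      have mem_image {s t : ℝ} (hs : dist s (j / N) < δ) (ht : dist t (i / N) < δ) :
          h s t ∈ uncurry h '' ball ((j / N : ℝ), (i / N : ℝ)) δ :=
        ⟨(s, t), max_lt hs ht, rfl⟩
      simp only [insert_subset_iff, singleton_subset_iff]
      exact ⟨mem_image (by simpa) (by simpa), mem_image (by simpa) (dist_succ_div i),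
        mem_image (dist_succ_div j) (by simpa), mem_image (dist_succ_div j) (dist_succ_div i)⟩
  have hrows : ∀ j ≤ N, pathSum d (h 0) N = pathSum d (h (j / N)) N := by
    intro j hj
    induction j with
    | zero => simp
    | succ j ih => exact (ih (by lia)).trans (hrow j hj)
  simpa [div_self hN'.ne'] using hrows N le_rfl

end IsLocallyExact

end LocallyExact

section ConnectedLinks

/-- A choice, for every two points of `Y`, of a connected set containing both of them. It serves as
a substitute for a choice of paths. -/
structure ConnectedLinks (Y : Type*) [TopologicalSpace Y] where
  link : Y → Y → Set Y
  isPreconnected : ∀ x y, IsPreconnected (link x y)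
  left_mem : ∀ x y, x ∈ link x y
  right_mem : ∀ x y, y ∈ link x y

open Classical in
theorem exists_connectedLinks_subset_ball (Y : Type*) [PseudoMetricSpace Y] [PreconnectedSpace Y]
    [LocallyConnectedSpace Y] {r : ℝ} (hr : 0 < r) :
    ∃ K : ConnectedLinks Y, ∀ y, ∀ᶠ p in 𝓝 (y, y), K.link p.1 p.2 ⊆ ball y r := by
  let comp (x : Y) : Set Y := connectedComponentIn (ball x (r / 2)) x
  have mem_comp (x : Y) : x ∈ comp x := mem_connectedComponentIn (mem_ball_self (half_pos hr))
  refine ⟨⟨fun x y => if y ∈ comp x then comp x else univ, fun x y => ?_, fun x y => ?_,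
    fun x y => ?_⟩, fun y => ?_⟩
  · split_ifs
    · exact isPreconnected_connectedComponentIn
    · exact isPreconnected_univ
  · split_ifs
    · exact mem_comp x
    · trivial
  · split_ifs with h
    · exact h
    · trivial
  · have hnhds : connectedComponentIn (ball y (r / 4)) y ∈ 𝓝 y :=
      connectedComponentIn_mem_nhds (ball_mem_nhds y (by positivity))
    filter_upwards [prod_mem_nhds hnhds hnhds] with ⟨a, b⟩ ⟨ha, hb⟩
    have hay : dist a y < r / 4 := mem_ball.1 (connectedComponentIn_subset _ _ ha)
    have hsub : ball y (r / 4) ⊆ ball a (r / 2) := ball_subset_ball' (by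
      rw [dist_comm]; linarith)
    have hba : b ∈ comp a := isPreconnected_connectedComponentIn.subset_connectedComponentIn ha
      ((connectedComponentIn_subset _ _).trans hsub) hb
    simp only [if_pos hba]
    exact (connectedComponentIn_subset _ _).trans (ball_subset_ball' (by linarith))

theorem exists_tendsto_nhds_subtype_of_isCompact {α : Type*} [PseudoMetricSpace α] {X : Set α}
    (hX : IsCompact X) (hne : X.Nonempty) : ∃ g : α → X, ∀ x : X, Tendsto g (𝓝 x) (𝓝 x) := by
  choose g hgX hg using hX.exists_infDist_eq_dist hne
  refine ⟨fun z => ⟨g z, hgX z⟩, fun x => tendsto_subtype_rng.2 ?_⟩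
  have hdist (z : α) : dist (g z) x ≤ 2 * dist z x := by
    have hle : dist z (g z) ≤ dist z x := hg z ▸ infDist_le_dist_of_mem x.2
    linarith [dist_triangle_left (g z) x z]
  have hcont : Continuous fun z => 2 * dist z (x : α) := by fun_prop
  have hlim : Tendsto (fun z => 2 * dist z (x : α)) (𝓝 x) (𝓝 0) := by
    simpa using hcont.tendsto (x : α)
  exact tendsto_iff_dist_tendsto_zero.2 (squeeze_zero (fun _ => dist_nonneg) hdist hlim)

end ConnectedLinks

section Displacement

variable {X : Set ℂ} {φ : ℂ → X} {K : ConnectedLinks X}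

/-- The increment of `log (φ z - z)` from `z = u` to `z = v`, where the possibly discontinuous
passage from `φ u` to `φ v` is replaced by the connected set `K.link (φ u) (φ v)`. -/
noncomputable def displacementIncrement (φ : ℂ → X) (K : ConnectedLinks X) (u v : ℂ) : ℂ :=
  logIncrement (fun p : X × ℂ => (p.1 : ℂ) - p.2) (K.link (φ u) (φ v) ×ˢ segment ℝ u v)
    (φ u, u) (φ v, v)

theorem IsLogBranchOn.displacementIncrement_eq {L : X × ℂ → ℂ} {u v : ℂ}
    (hL : IsLogBranchOn L (fun p => (p.1 : ℂ) - p.2) (K.link (φ u) (φ v) ×ˢ segment ℝ u v)) :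
    displacementIncrement φ K u v = L (φ v, v) - L (φ u, u) :=
  hL.logIncrement_eq ((K.isPreconnected _ _).prod (convex_segment u v).isPreconnected)
    ⟨K.left_mem _ _, left_mem_segment ℝ u v⟩ ⟨K.right_mem _ _, right_mem_segment ℝ u v⟩

theorem IsLogBranchOn.isExactOn_displacementIncrement {L : X × ℂ → ℂ} {T : Set (X × ℂ)}
    {U : Set ℂ} (hL : IsLogBranchOn L (fun p => (p.1 : ℂ) - p.2) T)
    (h : ∀ u ∈ U, ∀ v ∈ U, K.link (φ u) (φ v) ×ˢ segment ℝ u v ⊆ T) :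
    IsExactOn (displacementIncrement φ K) U :=
  ⟨fun u => L (φ u, u), fun u hu v hv => (hL.mono (h u hu v hv)).displacementIncrement_eq⟩

theorem exists_isExactOn_displacementIncrement_of_notMem (hX : IsCompact X)
    (hXc : IsPreconnected Xᶜ) {z : ℂ} (hz : z ∉ X) :
    ∃ U ∈ 𝓝 z, IsExactOn (displacementIncrement φ K) U := by
  obtain ⟨r, hr, hball⟩ := Metric.isOpen_iff.1 hX.isClosed.isOpen_compl z hz
  obtain ⟨l, hl⟩ := exists_isLogBranchOn_sub hX hXc hz
  have hfst : IsLogBranchOn (fun p : X × ℂ => l p.1) (fun p => (p.1 : ℂ) - z) (univ ×ˢ ball z r) :=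
    hl.comp (g := fun p : X × ℂ => (p.1 : ℂ)) (by fun_prop) fun p _ => p.1.2
  refine ⟨ball z r, ball_mem_nhds z hr,
    (hfst.add_log_div (by fun_prop) fun p hp => ?_).isExactOn_displacementIncrement
      fun u hu v hv => Set.prod_mono (subset_univ _) ((convex_ball z r).segment_subset hu hv)⟩
  exact sub_div_sub_mem_slitPlane fun hmem =>
    hball ((convex_ball z r).segment_subset (mem_ball_self hr) hp.2 hmem) p.1.2

theorem exists_isExactOn_displacementIncrement_of_tendsto {z : ℂ} {y : X} (hyz : (y : ℂ) ≠ z)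
    (hφ : Tendsto φ (𝓝 z) (𝓝 y))
    (hK : ∀ᶠ p in 𝓝 (y, y), K.link p.1 p.2 ⊆ ball y (dist (y : ℂ) z / 2)) :
    ∃ U ∈ 𝓝 z, IsExactOn (displacementIncrement φ K) U := by
  set r : ℝ := dist (y : ℂ) z
  have hr : 0 < r := dist_pos.2 hyz
  rw [nhds_prod_eq] at hK
  obtain ⟨V, hV, hVK⟩ := eventually_prod_self_iff'.1 hK
  obtain ⟨L, hL⟩ : ∃ L : X × ℂ → ℂ,
      IsLogBranchOn L (fun p => (p.1 : ℂ) - p.2) (ball y (r / 2) ×ˢ ball z (r / 2)) := by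
    have hne : (y : ℂ) - z ≠ 0 := sub_ne_zero.2 hyz
    refine ⟨_, (isLogBranchOn_const hne).add_log_div (by fun_prop) fun ⟨x, w⟩ ⟨hx, hw⟩ => ?_⟩
    have hquot : ((x : ℂ) - w) / (y - z) = 1 + ((x - y) - (w - z)) / (y - z) := by
      field_simp; ring
    rw [hquot]
    refine mem_slitPlane_of_norm_lt_one ?_
    rw [norm_div, div_lt_one (norm_pos_iff.2 hne), ← dist_eq_norm (y : ℂ)]
    have hxy : ‖(x : ℂ) - y‖ < r / 2 := dist_eq_norm (x : ℂ) y ▸ hx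
    have hwz : ‖w - z‖ < r / 2 := dist_eq_norm w z ▸ hw
    exact (norm_sub_le _ _).trans_lt (by linarith)
  refine ⟨φ ⁻¹' V ∩ ball z (r / 2), inter_mem (hφ hV) (ball_mem_nhds z (half_pos hr)),
    hL.isExactOn_displacementIncrement fun u hu v hv => ?_⟩
  exact Set.prod_mono (hVK _ hu.1 _ hv.1) ((convex_ball z (r / 2)).segment_subset hu.2 hv.2)

theorem displacementIncrement_of_norm_add_lt {u v : ℂ}
    (h : ∀ x : X, ‖(x : ℂ)‖ + ‖v - u‖ < ‖u‖) :
    displacementIncrement φ K u v = log (v / u) + (log (1 - φ v / v) - log (1 - φ u / u)) := by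
  have hvu : ‖v - u‖ < ‖u‖ := (le_add_of_nonneg_left (norm_nonneg _)).trans_lt (h (φ u))
  have hu : u ≠ 0 := norm_pos_iff.1 ((norm_nonneg _).trans_lt hvu)
  have hseg {w : ℂ} (hw : w ∈ segment ℝ u v) : ‖w - u‖ ≤ ‖v - u‖ := by
    exact mem_closedBall_iff_norm.1 <| (convex_closedBall u ‖v - u‖).segment_subset
      (mem_closedBall_self (norm_nonneg _)) (mem_closedBall_iff_norm.2 le_rfl) hw
  have hlt {w : ℂ} (hw : w ∈ segment ℝ u v) (x : X) : ‖(x : ℂ)‖ < ‖w‖ := by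
    linarith [h x, hseg hw, norm_sub_norm_le u w, norm_sub_rev u w]
  have hne {w : ℂ} (hw : w ∈ segment ℝ u v) : w ≠ 0 :=
    norm_pos_iff.1 ((norm_nonneg _).trans_lt (hlt hw (φ u)))
  have hneg : IsLogBranchOn (fun p : X × ℂ => log (-u) + log (-p.2 / -u)) (fun p => -p.2)
      (K.link (φ u) (φ v) ×ˢ segment ℝ u v) := by
    refine (isLogBranchOn_const (neg_ne_zero.2 hu)).add_log_div (by fun_prop) fun p hp => ?_
    have hquot : -p.2 / -u = 1 + (p.2 - u) / u := by field_simp; ring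
    rw [hquot]
    refine mem_slitPlane_of_norm_lt_one ?_
    rw [norm_div, div_lt_one (norm_pos_iff.2 hu)]
    exact (hseg hp.2).trans_lt hvu
  have hquot (x : X) {w : ℂ} (hw : w ≠ 0) : ((x : ℂ) - w) / -w = 1 - x / w := by
    field_simp; ring
  rw [(hneg.add_log_div (v := fun p => (p.1 : ℂ) - p.2) (by fun_prop)
    fun p hp => ?_).displacementIncrement_eq]
  · simp only [hquot _ hu, hquot _ (hne (right_mem_segment ℝ u v)), neg_div_neg_eq, div_self hu,
      log_one]
    ring
  · rw [hquot _ (hne hp.2), sub_eq_add_neg]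
    refine mem_slitPlane_of_norm_lt_one ?_
    rw [norm_neg, norm_div, div_lt_one (norm_pos_iff.2 (hne hp.2))]
    exact hlt hp.2 p.1

theorem log_exp_two_pi_mul_I_div {N : ℕ} (hN : 2 ≤ N) :
    log (exp (2 * Real.pi * I / N)) = 2 * Real.pi * I / N := by
  have him : (2 * Real.pi * I / N).im = 2 * Real.pi / N := by simp
  have hle : 2 * Real.pi / N ≤ Real.pi := by
    rw [div_le_iff₀ (by positivity)]
    nlinarith [Real.pi_pos, (Nat.ofNat_le_cast (α := ℝ)).2 hN]
  exact log_exp (him ▸ (neg_lt_zero.2 Real.pi_pos).trans (by positivity)) (him ▸ hle)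

theorem eventually_pathSum_displacementIncrement_circle {R : ℝ} (hR : 0 < R)
    (hX : X ⊆ ball 0 (R / 2)) :
    ∀ᶠ N in atTop, pathSum (displacementIncrement φ K)
      (fun t => circleMap 0 R (2 * Real.pi * t)) N = 2 * Real.pi * I := by
  have hlim : Tendsto (fun N : ℕ => exp (2 * Real.pi * I / N)) atTop (𝓝 1) := by
    simpa using (tendsto_const_div_atTop_nhds_zero_nat (2 * Real.pi * I)).cexp
  filter_upwards [hlim.eventually (ball_mem_nhds 1 one_half_pos), eventually_ge_atTop 2]
    with N hζ hN
  set ζ : ℂ := exp (2 * Real.pi * I / N)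
  set x : ℕ → ℂ := fun i => circleMap 0 R (2 * Real.pi * (i / N))
  have hN0 : (N : ℂ) ≠ 0 := Nat.cast_ne_zero.2 (by lia)
  have hnorm (i : ℕ) : ‖x i‖ = R := by simp [x, abs_of_pos hR]
  have hx0 (i : ℕ) : x i ≠ 0 := norm_pos_iff.1 (hnorm i ▸ hR)
  have hsucc (i : ℕ) : x (i + 1) = x i * ζ := by
    simp only [x, ζ, circleMap_zero, mul_assoc, ← exp_add]
    congr 2
    push_cast
    ring
  have hperiod : x N = x 0 := by
    simpa [x, div_self (ofReal_ne_zero.1 hN0)] using periodic_circleMap 0 R 0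
  have hstep (i : ℕ) : displacementIncrement φ K (x i) (x (i + 1)) =
      log ζ + (log (1 - φ (x (i + 1)) / x (i + 1)) - log (1 - φ (x i) / x i)) := by
    rw [displacementIncrement_of_norm_add_lt fun a => ?_]
    · rw [show x (i + 1) / x i = ζ by rw [hsucc, mul_div_cancel_left₀ _ (hx0 i)]]
    · have ha : ‖(a : ℂ)‖ < R / 2 := mem_ball_zero_iff.1 (hX a.2)
      have hζ' : ‖ζ - 1‖ < 1 / 2 := mem_ball_iff_norm.1 hζ
      rw [hsucc, ← mul_sub_one, norm_mul, hnorm]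
      nlinarith
  calc pathSum (displacementIncrement φ K) (fun t => circleMap 0 R (2 * Real.pi * t)) N
      = ∑ i ∈ Finset.range N, displacementIncrement φ K (x i) (x (i + 1)) := rfl
    _ = N * log ζ := by
      simp_rw [hstep, Finset.sum_add_distrib,
        Finset.sum_range_sub fun i => log (1 - φ (x i) / x i), hperiod]
      simp
    _ = 2 * Real.pi * I := by rw [log_exp_two_pi_mul_I_div hN, mul_div_cancel₀ _ hN0]

theorem not_isLocallyExact_displacementIncrement (hX : Bornology.IsBounded X) :
    ¬ IsLocallyExact (displacementIncrement φ K) := by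
  intro hd
  obtain ⟨R, hR, hXR⟩ := hX.subset_ball_lt 0 0
  let h (s t : ℝ) : ℂ := circleMap 0 (2 * R * s) (2 * Real.pi * t)
  have hh : Continuous (uncurry h) := by
    unfold h circleMap
    fun_prop
  have hloop (s : ℝ) : h s 1 = h s 0 := by
    simpa [h] using periodic_circleMap 0 (2 * R * s) 0
  have hzero : h 0 = fun _ => 0 := by
    funext t
    simp [h]
  have hcircle := eventually_pathSum_displacementIncrement_circle (φ := φ) (K := K)
    (mul_pos two_pos hR) (by simpa using hXR)
  obtain ⟨N, hhomotopy, hcircle⟩ :=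
    ((hd.eventually_pathSum_eq_of_homotopy hh hloop).and hcircle).exists
  rw [hzero, hd.pathSum_const] at hhomotopy
  refine two_pi_I_ne_zero (hcircle.symm.trans ?_)
  simpa [h] using hhomotopy.symm

theorem exists_isLocallyExact_displacementIncrement (hX : IsCompact X) (hconn : IsConnected X)
    [LocallyConnectedSpace X] (hXc : IsPreconnected Xᶜ) {f : X → X} (hf : Continuous f)
    (hfix : ∀ x, f x ≠ x) :
    ∃ (φ : ℂ → X) (K : ConnectedLinks X), IsLocallyExact (displacementIncrement φ K) := by
  have := isCompact_iff_compactSpace.1 hX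
  have := isPreconnected_iff_preconnectedSpace.1 hconn.isPreconnected
  obtain ⟨m, hm, hmf⟩ := isCompact_univ.exists_forall_le' (f := fun x => dist (f x) x) (a := 0)
    (by fun_prop) fun x _ => dist_pos.2 (hfix x)
  obtain ⟨K, hK⟩ := exists_connectedLinks_subset_ball X (half_pos hm)
  obtain ⟨g, hg⟩ := exists_tendsto_nhds_subtype_of_isCompact hX hconn.nonempty
  refine ⟨f ∘ g, K, fun z => ?_⟩
  by_cases hz : z ∈ X
  · lift z to X using hz
    refine exists_isExactOn_displacementIncrement_of_tendsto
      (Subtype.coe_injective.ne (hfix z)) ((hf.tendsto z).comp (hg z)) ?_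
    filter_upwards [hK (f z)] with p hp
    exact hp.trans (ball_subset_ball (div_le_div_of_nonneg_right (hmf z trivial) zero_le_two))
  · exact exists_isExactOn_displacementIncrement_of_notMem hX hXc hz

theorem hasFPP_of_isPreconnected_compl (hX : IsCompact X) (hconn : IsConnected X)
    [LocallyConnectedSpace X] (hXc : IsPreconnected Xᶜ) : HasFPP X := by
  intro f hf
  by_contra! hfix
  obtain ⟨φ, K, hd⟩ := exists_isLocallyExact_displacementIncrement hX hconn hXc hf hfix
  exact not_isLocallyExact_displacementIncrement hX.isBounded hd

end Displacement

theorem HasFPP.of_homeomorph {Y Z : Type*} [TopologicalSpace Y] [TopologicalSpace Z]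
    (hY : HasFPP Y) (e : Y ≃ₜ Z) : HasFPP Z := fun f hf =>
  let ⟨y, hy⟩ := hY (e.symm ∘ f ∘ e) (by fun_prop)
  ⟨e y, e.symm_apply_eq.1 hy⟩

/-- A locally connected plane continuum which does not separate the plane has the fixed
point property. -/
theorem stmt_7 (X : Set (EuclideanSpace ℝ (Fin 2)))
    (hcomp : IsCompact X) (hconn : IsConnected X)
    (hlc : LocallyConnectedSpace ↥X)
    (hnosep : IsConnected Xᶜ) : HasFPP ↥X := by
  let e : ℂ ≃ₜ EuclideanSpace ℝ (Fin 2) := orthonormalBasisOneI.repr.toHomeomorph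
  let eX : (e ⁻¹' X) ≃ₜ X := e.subtype fun _ => Iff.rfl
  have : LocallyConnectedSpace (e ⁻¹' X) := eX.isOpenEmbedding.locallyConnectedSpace
  have hcompl : IsPreconnected (e ⁻¹' X)ᶜ := (e.isConnected_preimage.2 hnosep).isPreconnected
  exact (hasFPP_of_isPreconnected_compl (e.isCompact_preimage.2 hcomp)
    (e.isConnected_preimage.2 hconn) hcompl).of_homeomorph eX
end

section
/- Let S ⊆ ℝ² be a simple closed curve and let X ⊆ ℝ² be a set with S ⊆ X. If there exists a point a in the bounded connected component of ℝ² ∖ S with a ∉ X, then S is a retract of X, i.e., there exists a continuous map r : X → S with r(s) = s for all s ∈ S. -/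
/-!
Identify the plane with `ℂ`. For a compact set `S ∌ a`, a continuous logarithm of `z - a` on `S`
exists exactly when the component of `a` in `Sᶜ` is unbounded (Eilenberg's criterion).

Let `S` be a simple closed curve around `a`, with `e : S ≃ₜ Circle`, and let `k` be the degree of
`z - a` along `e`, so that `z - a = e z ^ k * exp (l z)` on `S`. If a prime `p` divides `k`, then
`z - a` has a continuous `p`-th root `w` on `S`. The compact connected set `w(S)` is disjoint from
its rotation by a `p`-th root of unity, which forces the component of `0` in its complement to be
unbounded; so `w`, and hence `z - a`, has a continuous logarithm, contradicting the criterion.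
Thus `k = ±1`. Extending `l` by Tietze's theorem, `e ^ k` extends off `a` as the direction of
`(z - a) / exp (l z)`, and composing its `k`-th power with `e⁻¹` gives the retraction.
-/

section ContinuousLog

open Complex

variable {X Y : Type*} [TopologicalSpace X] [TopologicalSpace Y] {f g : X → ℂ}

/-- `f` has a continuous (single-valued) logarithm on the whole space `X`. -/
def HasContinuousLog (f : X → ℂ) : Prop :=
  ∃ l : X → ℂ, Continuous l ∧ ∀ x, exp (l x) = f x

namespace HasContinuousLog

lemma ne_zero (hf : HasContinuousLog f) (x : X) : f x ≠ 0 := by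
  obtain ⟨l, -, hl⟩ := hf
  exact hl x ▸ exp_ne_zero _

lemma continuous (hf : HasContinuousLog f) : Continuous f := by
  obtain ⟨l, hl, hexp⟩ := hf
  exact hl.cexp.congr hexp

lemma comp (hf : HasContinuousLog f) {φ : Y → X} (hφ : Continuous φ) :
    HasContinuousLog fun y => f (φ y) := by
  obtain ⟨l, hl, hexp⟩ := hf
  exact ⟨fun y => l (φ y), hl.comp hφ, fun y => hexp (φ y)⟩

lemma mul (hf : HasContinuousLog f) (hg : HasContinuousLog g) :
    HasContinuousLog fun x => f x * g x := by
  obtain ⟨l, hl, hlf⟩ := hf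
  obtain ⟨m, hm, hmg⟩ := hg
  exact ⟨fun x => l x + m x, hl.add hm, fun x => by rw [exp_add, hlf, hmg]⟩

lemma pow (hf : HasContinuousLog f) (n : ℕ) : HasContinuousLog fun x => f x ^ n := by
  obtain ⟨l, hl, hlf⟩ := hf
  exact ⟨fun x => n * l x, by fun_prop, fun x => by rw [exp_nat_mul, hlf]⟩

lemma exists_pow_eq {n : ℕ} (hn : n ≠ 0) (hg : Continuous g) (hg0 : ∀ x, g x ≠ 0)
    (h : HasContinuousLog fun x => f x / g x ^ n) :
    ∃ w : X → ℂ, Continuous w ∧ ∀ x, w x ^ n = f x := by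
  obtain ⟨l, hl, hexp⟩ := h
  refine ⟨fun x => g x * exp (l x / n), by fun_prop, fun x => ?_⟩
  rw [mul_pow, ← exp_nat_mul, mul_div_cancel₀ _ (Nat.cast_ne_zero.2 hn), hexp,
    mul_div_cancel₀ _ (pow_ne_zero _ (hg0 x))]

end HasContinuousLog

lemma hasContinuousLog_const {c : ℂ} (hc : c ≠ 0) : HasContinuousLog fun _ : X => c :=
  ⟨fun _ => log c, continuous_const, fun _ => exp_log hc⟩

lemma hasContinuousLog_of_mem_slitPlane (hf : Continuous f) (h : ∀ x, f x ∈ slitPlane) :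
    HasContinuousLog f :=
  ⟨fun x => log (f x), hf.clog h, fun x => exp_log (slitPlane_ne_zero (h x))⟩

lemma HasContinuousLog.of_norm_sub_lt (hf : HasContinuousLog f) (hg : Continuous g)
    (h : ∀ x, ‖g x - f x‖ < ‖f x‖) : HasContinuousLog g := by
  have hquot : HasContinuousLog fun x => 1 + (g x - f x) / f x := by
    refine hasContinuousLog_of_mem_slitPlane
      (continuous_const.add ((hg.sub hf.continuous).div hf.continuous hf.ne_zero)) fun x => ?_
    apply mem_slitPlane_of_norm_lt_one
    rw [norm_div]
    exact (div_lt_one (norm_pos_iff.2 (hf.ne_zero x))).2 (h x)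
  convert hf.mul hquot using 2 with x
  have := hf.ne_zero x
  field_simp
  ring

lemma hasContinuousLog_of_simplyConnectedSpace [SimplyConnectedSpace X]
    [LocallyPathConnectedSpace X] (hf : Continuous f) (h0 : ∀ x, f x ≠ 0) :
    HasContinuousLog f := by
  obtain ⟨x₀⟩ : Nonempty X := inferInstance
  obtain ⟨l, ⟨-, hl⟩, -⟩ := isCoveringMapOn_exp.existsUnique_continuousMap_lifts ⟨f, hf⟩
    (exp_log (h0 x₀)) h0
  exact ⟨l, l.continuous, congrFun hl⟩

lemma sub_eq_sub_of_exp_eq_exp [PreconnectedSpace X] {l m : X → ℂ} (hl : Continuous l)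
    (hm : Continuous m) (h : ∀ x, exp (l x) = exp (m x)) (x y : X) : l x - m x = l y - m y := by
  have hconst := isCoveringMap_exp.eq_of_comp_eq (hl.sub hm) (continuous_const (y := l y - m y))
    (by funext z; simp [exp_sub, h]) y rfl
  exact congrFun hconst x

end ContinuousLog

section Circle

open Complex

lemma not_hasContinuousLog_circle_coe : ¬ HasContinuousLog fun z : Circle => (z : ℂ) := by
  rintro ⟨l, hl, hexp⟩
  have h := sub_eq_sub_of_exp_eq_exp (l := fun t : ℝ => l (Circle.exp t)) (m := fun t => t * I)
    (by fun_prop) (by fun_prop) (fun t => (hexp _).trans (Circle.coe_exp t)) (2 * Real.pi) 0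
  simp at h

lemma hasContinuousLog_of_periodic {f : Circle → ℂ} {l : ℝ → ℂ} (hl : Continuous l)
    (hper : Function.Periodic l (2 * Real.pi)) (hexp : ∀ t, exp (l t) = f (Circle.exp t)) :
    HasContinuousLog f := by
  have hquot : Topology.IsQuotientMap Circle.exp :=
    Circle.isAddQuotientCoveringMap_exp.toIsQuotientMap
  have hfac : ∀ s t, Circle.exp s = Circle.exp t → l s = l t := by
    intro s t hst
    obtain ⟨m, rfl⟩ := Circle.exp_eq_exp.1 hst
    exact hper.int_mul m t
  let l' : C(Circle, ℂ) := hquot.lift (f := Circle.exp) ⟨l, hl⟩ hfac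
  have hl' (t : ℝ) : l' (Circle.exp t) = l t :=
    DFunLike.congr_fun (hquot.lift_comp (f := Circle.exp) ⟨l, hl⟩ hfac) t
  refine ⟨l', l'.continuous, fun z => ?_⟩
  obtain ⟨t, rfl⟩ := hquot.surjective z
  rw [hl', hexp]

theorem exists_hasContinuousLog_div_zpow {f : Circle → ℂ} (hf : Continuous f)
    (h0 : ∀ z, f z ≠ 0) : ∃ k : ℤ, HasContinuousLog fun z : Circle => f z / (z : ℂ) ^ k := by
  obtain ⟨l, hl, hexp⟩ : HasContinuousLog fun t : ℝ => f (Circle.exp t) :=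
    hasContinuousLog_of_simplyConnectedSpace (by fun_prop) fun t => h0 _
  have hshift (t : ℝ) : exp (l (t + 2 * Real.pi)) = exp (l t) := by
    simp only [hexp, Circle.exp_add_two_pi]
  obtain ⟨k, hk⟩ := exp_eq_exp_iff_exists_int.1 (hshift 0)
  refine ⟨k, hasContinuousLog_of_periodic (l := fun t => l t - k * (t * I)) (by fun_prop) ?_ ?_⟩
  · intro t
    have hdiff := sub_eq_sub_of_exp_eq_exp (l := fun t => l (t + 2 * Real.pi)) (by fun_prop) hl
      hshift t 0
    push_cast
    linear_combination hdiff + hk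
  · intro t
    rw [exp_sub, hexp, exp_int_mul, Circle.coe_exp]

end Circle

section EilenbergCriterion

open Complex Set Topology Bornology

lemma frontier_connectedComponentIn_compl_subset {X : Type*} [TopologicalSpace X]
    [LocallyConnectedSpace X] {S : Set X} (hS : IsClosed S) (a : X) :
    frontier (connectedComponentIn Sᶜ a) ⊆ S := by
  intro z hz
  by_contra hzS
  have hzU : connectedComponentIn Sᶜ z ∈ 𝓝 z :=
    hS.isOpen_compl.connectedComponentIn.mem_nhds (mem_connectedComponentIn hzS)
  obtain ⟨w, hwz, hwa⟩ := mem_closure_iff_nhds.1 hz.1 _ hzU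
  apply hz.2
  rw [hS.isOpen_compl.connectedComponentIn.interior_eq, connectedComponentIn_eq hwa,
    ← connectedComponentIn_eq hwz]
  exact mem_connectedComponentIn hzS

variable {K S : Set ℂ} {a p q : ℂ}

lemma HasContinuousLog.exists_extension_off_component (hS : IsClosed S)
    (h : HasContinuousLog fun z : S => (z : ℂ) - a) :
    ∃ F : ℂ → ℂ, Continuous F ∧ (∀ z, F z ≠ 0) ∧
      ∀ z ∉ connectedComponentIn Sᶜ a, F z = z - a := by
  classical
  have haS : a ∉ S := fun ha => h.ne_zero ⟨a, ha⟩ (sub_self a)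
  obtain ⟨l, hl, hexp⟩ := h
  obtain ⟨L, hL⟩ := ContinuousMap.exists_restrict_eq hS ⟨l, hl⟩
  set U := connectedComponentIn Sᶜ a
  refine ⟨fun z => if z ∈ U then exp (L z) else z - a, ?_, fun z => ?_, fun z hz => if_neg hz⟩
  · refine Continuous.if (fun z hz => ?_) (by fun_prop) (by fun_prop)
    have hzS : z ∈ S := frontier_connectedComponentIn_compl_subset hS a hz
    exact (congrArg exp (DFunLike.congr_fun hL ⟨z, hzS⟩)).trans (hexp ⟨z, hzS⟩)
  · dsimp only
    split_ifs with hz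
    · exact exp_ne_zero _
    · exact sub_ne_zero.2 fun hza => hz (hza ▸ mem_connectedComponentIn haS)

theorem HasContinuousLog.not_isBounded_connectedComponentIn (hS : IsClosed S)
    (h : HasContinuousLog fun z : S => (z : ℂ) - a) :
    ¬ IsBounded (connectedComponentIn Sᶜ a) := by
  intro hb
  obtain ⟨F, hF, hF0, hFeq⟩ := h.exists_extension_off_component hS
  obtain ⟨R, hR0, hR⟩ := hb.subset_ball_lt 0 a
  have hR0' : (R : ℂ) ≠ 0 := ofReal_ne_zero.2 hR0.ne'
  have hcircle (z : Circle) : F (a + R * z) = R * z := by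
    rw [hFeq _ fun hz => ?_, add_sub_cancel_left]
    simpa [abs_of_pos hR0, Circle.norm_coe] using hR hz
  have hlog := ((hasContinuousLog_of_simplyConnectedSpace hF hF0).comp
    (φ := fun z : Circle => a + R * z) (by fun_prop)).mul
    (hasContinuousLog_const (inv_ne_zero hR0'))
  simp only [hcircle, mul_div_cancel_left₀ _ hR0', ← div_eq_mul_inv] at hlog
  exact not_hasContinuousLog_circle_coe hlog

lemma eventually_hasContinuousLog_sub_iff (hS : IsClosed S) (hp : p ∉ S) :
    ∀ᶠ q in 𝓝 p, (HasContinuousLog fun z : S => (z : ℂ) - p) ↔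
      HasContinuousLog fun z : S => (z : ℂ) - q := by
  obtain ⟨δ, hδ, hball⟩ := Metric.isOpen_iff.1 hS.isOpen_compl p hp
  have hfar (z : S) : δ ≤ ‖(z : ℂ) - p‖ := by
    by_contra! h
    exact hball (mem_ball_iff_norm.2 h) z.2
  filter_upwards [Metric.ball_mem_nhds p (half_pos hδ)] with q hq
  rw [mem_ball_iff_norm] at hq
  refine ⟨fun h => h.of_norm_sub_lt (by fun_prop) fun z => ?_,
    fun h => h.of_norm_sub_lt (by fun_prop) fun z => ?_⟩
  · rw [sub_sub_sub_cancel_left, norm_sub_rev]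
    linarith [hfar z]
  · rw [sub_sub_sub_cancel_left]
    linarith [hfar z, norm_sub_le_norm_sub_add_norm_sub (z : ℂ) q p]

lemma hasContinuousLog_sub_iff_of_mem_connectedComponentIn (hS : IsClosed S)
    (hq : q ∈ connectedComponentIn Sᶜ p) :
    (HasContinuousLog fun z : S => (z : ℂ) - p) ↔ HasContinuousLog fun z : S => (z : ℂ) - q := by
  have hp : p ∈ Sᶜ := connectedComponentIn_nonempty_iff.1 ⟨q, hq⟩
  refine isPreconnected_connectedComponentIn.induction₂
    (fun x y => (HasContinuousLog fun z : S => (z : ℂ) - x) ↔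
      HasContinuousLog fun z : S => (z : ℂ) - y)
    (fun x hx => ?_) (fun x y z _ _ _ => Iff.trans) (fun x y _ _ => Iff.symm)
    (mem_connectedComponentIn hp) hq
  exact nhdsWithin_le_nhds
    (eventually_hasContinuousLog_sub_iff hS (connectedComponentIn_subset _ _ hx))

lemma hasContinuousLog_sub_of_norm_lt (h : ∀ z ∈ K, ‖z‖ < ‖q‖) :
    HasContinuousLog fun z : K => (z : ℂ) - q := by
  rcases isEmpty_or_nonempty K with hK | ⟨⟨z₀, hz₀⟩⟩
  · exact ⟨fun _ => 0, continuous_const, fun z => isEmptyElim z⟩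
  · have hq : -q ≠ 0 := neg_ne_zero.2 (norm_pos_iff.1 ((norm_nonneg z₀).trans_lt (h z₀ hz₀)))
    refine (hasContinuousLog_const hq).of_norm_sub_lt (by fun_prop) fun z => ?_
    simpa using h z z.2

theorem hasContinuousLog_sub_iff_not_isBounded (hK : IsCompact K) :
    (HasContinuousLog fun z : K => (z : ℂ) - p) ↔
      ¬ IsBounded (connectedComponentIn Kᶜ p) := by
  refine ⟨fun h => h.not_isBounded_connectedComponentIn hK.isClosed, fun hb => ?_⟩
  obtain ⟨R, hR⟩ := hK.isBounded.subset_ball 0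
  obtain ⟨q, hq, hqR⟩ : ∃ q ∈ connectedComponentIn Kᶜ p, R < ‖q‖ := by
    by_contra! h
    exact hb (isBounded_iff_forall_norm_le.2 ⟨R, h⟩)
  rw [hasContinuousLog_sub_iff_of_mem_connectedComponentIn hK.isClosed hq]
  exact hasContinuousLog_sub_of_norm_lt fun z hz => (mem_ball_zero_iff.1 (hR hz)).trans hqR

end EilenbergCriterion

section DisjointIsometricImage

open Set Bornology

variable {E : Type*} [NormedAddCommGroup E] [NormedSpace ℝ E] {K : Set E}

lemma not_isBounded_connectedComponentIn_compl_of_norm_le {w : E} (hw : w ∉ K) (hw0 : w ≠ 0)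
    (hmax : ∀ x ∈ K, ‖x‖ ≤ ‖w‖) : ¬ IsBounded (connectedComponentIn Kᶜ w) := by
  intro hb
  have hw' : 0 < ‖w‖ := norm_pos_iff.2 hw0
  have hnorm (t : ℝ) (ht : 1 ≤ t) : ‖t • w‖ = t * ‖w‖ := by
    rw [norm_smul, Real.norm_of_nonneg (zero_le_one.trans ht)]
  have hray : (fun t : ℝ => t • w) '' Ici 1 ⊆ connectedComponentIn Kᶜ w := by
    refine (isPreconnected_Ici.image _ (by fun_prop)).subset_connectedComponentIn
      ⟨1, self_mem_Ici, one_smul _ _⟩ ?_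
    rintro _ ⟨t, ht, rfl⟩ htK
    have ht1 : t = 1 := by
      have := hmax _ htK
      rw [hnorm t ht] at this
      exact le_antisymm (le_of_mul_le_mul_right (by simpa using this) hw') ht
    simp only [ht1, one_smul] at htK
    exact hw htK
  obtain ⟨R, hR0, hR⟩ := hb.subset_ball_lt 0 0
  have ht : 1 ≤ 1 + R / ‖w‖ := le_add_of_nonneg_right (by positivity)
  have hlt := hR (hray ⟨_, ht, rfl⟩)
  rw [mem_ball_zero_iff, hnorm _ ht, add_mul, div_mul_cancel₀ _ hw'.ne'] at hlt
  linarith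

variable {φ : E ≃ₗᵢ[ℝ] E}

lemma zero_notMem_of_disjoint_image (h : Disjoint K (φ '' K)) : (0 : E) ∉ K :=
  fun h0 => disjoint_left.1 h h0 ⟨0, h0, map_zero φ⟩

lemma disjoint_image_symm (h : Disjoint K (φ '' K)) : Disjoint K (φ.symm '' K) := by
  rw [disjoint_left]
  rintro _ hx ⟨y, hy, rfl⟩
  exact disjoint_left.1 h hy ⟨_, hx, φ.apply_symm_apply y⟩

lemma disjoint_image_connectedComponentIn_compl (hK : IsCompact K) (hKc : IsPreconnected K)
    (hdisj : Disjoint K (φ '' K)) (hb : IsBounded (connectedComponentIn Kᶜ 0)) :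
    Disjoint (φ '' K) (connectedComponentIn Kᶜ 0) := by
  rw [disjoint_left]
  intro y hyK hy
  have hsub : φ '' K ⊆ connectedComponentIn Kᶜ 0 := by
    rw [connectedComponentIn_eq hy]
    exact (hKc.image φ φ.continuous.continuousOn).subset_connectedComponentIn hyK
      hdisj.subset_compl_left
  obtain ⟨m, hmK, hmax⟩ := hK.exists_isMaxOn (image_nonempty.1 ⟨y, hyK⟩)
    continuous_norm.continuousOn
  have hm : φ m ∈ connectedComponentIn Kᶜ 0 := hsub (mem_image_of_mem φ hmK)
  have hm0 : φ m ≠ 0 := by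
    rw [map_ne_zero_iff φ φ.injective]
    exact ne_of_mem_of_not_mem hmK (zero_notMem_of_disjoint_image hdisj)
  rw [connectedComponentIn_eq hm] at hb
  refine not_isBounded_connectedComponentIn_compl_of_norm_le
    (connectedComponentIn_subset _ _ hm) hm0 (fun x hx => ?_) hb
  rw [φ.norm_map]
  exact hmax hx

lemma image_connectedComponentIn_compl_zero_subset (hK : IsCompact K) (hKc : IsPreconnected K)
    (hdisj : Disjoint K (φ '' K)) (hb : IsBounded (connectedComponentIn Kᶜ 0)) :
    φ '' connectedComponentIn Kᶜ 0 ⊆ connectedComponentIn Kᶜ 0 := by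
  have h0 := mem_connectedComponentIn (F := Kᶜ) (zero_notMem_of_disjoint_image hdisj)
  refine (isPreconnected_connectedComponentIn.image φ
    φ.continuous.continuousOn).subset_connectedComponentIn ⟨0, h0, map_zero φ⟩ ?_
  rintro _ ⟨x, hx, rfl⟩ hxK
  exact disjoint_left.1 (disjoint_image_connectedComponentIn_compl hK hKc
    (disjoint_image_symm hdisj) hb) ⟨_, hxK, φ.symm_apply_apply x⟩ hx

/-- If the component `U` of `0` were bounded, `φ` would preserve `U`, hence its frontier, which is
nonempty and contained in `K`. -/
theorem not_isBounded_connectedComponentIn_compl_of_disjoint_image [Nontrivial E]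
    (hK : IsCompact K) (hKc : IsPreconnected K) (hdisj : Disjoint K (φ '' K)) :
    ¬ IsBounded (connectedComponentIn Kᶜ 0) := by
  intro hb
  set U := connectedComponentIn Kᶜ 0
  have hinv : φ '' U = U := by
    refine (image_connectedComponentIn_compl_zero_subset hK hKc hdisj hb).antisymm fun x hx => ?_
    exact ⟨φ.symm x, image_connectedComponentIn_compl_zero_subset hK hKc
      (disjoint_image_symm hdisj) hb (mem_image_of_mem _ hx), φ.apply_symm_apply x⟩
  have hfront : φ '' frontier U = frontier U := by
    conv_rhs => rw [← hinv]
    exact φ.toHomeomorph.image_frontier U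
  obtain ⟨x, hx⟩ : (frontier U).Nonempty := by
    refine nonempty_frontier_iff.2
      ⟨⟨0, mem_connectedComponentIn (zero_notMem_of_disjoint_image hdisj)⟩, fun hU => ?_⟩
    exact NormedSpace.unbounded_univ ℝ E (hU ▸ hb)
  have hUK : frontier U ⊆ K := frontier_connectedComponentIn_compl_subset hK.isClosed 0
  exact disjoint_left.1 hdisj (hUK (hfront ▸ mem_image_of_mem φ hx)) (mem_image_of_mem φ (hUK hx))

end DisjointIsometricImage

section Roots

open Complex Set Bornology

lemma exists_circle_pow_eq_one_ne_one {n : ℕ} (hn : 1 < n) : ∃ ζ : Circle, ζ ^ n = 1 ∧ ζ ≠ 1 := by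
  have hζ := isPrimitiveRoot_exp n (by omega)
  exact ⟨⟨_, mem_sphere_zero_iff_norm.2 (hζ.norm'_eq_one (by omega))⟩,
    Circle.ext hζ.pow_eq_one, fun h => hζ.ne_one hn (congrArg Subtype.val h)⟩

theorem not_isBounded_connectedComponentIn_compl_of_pow_eq_sub {K : Set ℂ} (hK : IsCompact K)
    (hKc : IsPreconnected K) {p : ℂ} (hp : p ∉ K) {n : ℕ} (hn : 1 < n) {w : K → ℂ}
    (hw : Continuous w) (hwn : ∀ z, w z ^ n = z - p) :
    ¬ IsBounded (connectedComponentIn Kᶜ p) := by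
  have : CompactSpace K := isCompact_iff_compactSpace.1 hK
  have : PreconnectedSpace K := isPreconnected_iff_preconnectedSpace.1 hKc
  obtain ⟨ζ, hζn, hζ1⟩ := exists_circle_pow_eq_one_ne_one hn
  have hdisj : Disjoint (range w) (rotation ζ '' range w) := by
    rw [disjoint_left]
    rintro _ ⟨y, rfl⟩ ⟨_, ⟨x, rfl⟩, hxy⟩
    rw [rotation_apply] at hxy
    have hyx : y = x := by
      have : (y : ℂ) - p = x - p := by
        rw [← hwn, ← hwn, ← hxy, mul_pow, ← Circle.coe_pow, hζn, Circle.coe_one, one_mul]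
      exact Subtype.ext (sub_left_injective this)
    have hwx : w x ≠ 0 := by
      rw [← pow_ne_zero_iff (n := n) (by omega), hwn]
      exact sub_ne_zero.2 (ne_of_mem_of_not_mem x.2 hp)
    rw [hyx, mul_eq_right₀ hwx] at hxy
    exact hζ1 (Circle.coe_eq_one.1 hxy)
  have hlog : HasContinuousLog fun z : range w => (z : ℂ) - 0 :=
    (hasContinuousLog_sub_iff_not_isBounded (isCompact_range hw)).2
      (not_isBounded_connectedComponentIn_compl_of_disjoint_image (isCompact_range hw)
        (isPreconnected_range hw) hdisj)
  rw [← hasContinuousLog_sub_iff_not_isBounded hK]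
  simpa only [sub_zero, rangeFactorization_coe, hwn] using
    (hlog.comp (continuous_rangeFactorization_iff.2 hw)).pow n

end Roots

section SimpleClosedCurve

open Complex Set Bornology

namespace IsSimpleClosedCurve

variable {α β : Type*} [TopologicalSpace α] [TopologicalSpace β] {S : Set α}

lemma image (hS : IsSimpleClosedCurve S) (φ : α ≃ₜ β) : IsSimpleClosedCurve (φ '' S) :=
  hS.map fun h => (φ.image S).symm.trans h

lemma nonempty_homeomorph_circle (hS : IsSimpleClosedCurve S) : Nonempty (S ≃ₜ Circle) := by
  let L := orthonormalBasisOneI.repr.symm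
  exact hS.map fun h => h.trans <|
    L.toHomeomorph.subtype (q := fun z => z ∈ Submonoid.unitSphere ℂ) fun x => by
      simp [Submonoid.unitSphere]

lemma isCompact (hS : IsSimpleClosedCurve S) : IsCompact S := by
  obtain ⟨e⟩ := hS.nonempty_homeomorph_circle
  exact isCompact_iff_compactSpace.2 e.symm.compactSpace

lemma isPreconnected (hS : IsSimpleClosedCurve S) : IsPreconnected S := by
  obtain ⟨e⟩ := hS.nonempty_homeomorph_circle
  exact isPreconnected_iff_preconnectedSpace.2
    (e.symm.surjective.denseRange.preconnectedSpace e.symm.continuous)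

theorem exists_isUnit_hasContinuousLog_div_zpow {S : Set ℂ} (hS : IsSimpleClosedCurve S)
    (e : S ≃ₜ Circle) {a : ℂ} (haS : a ∉ S) (hb : IsBounded (connectedComponentIn Sᶜ a)) :
    ∃ k : ℤ, IsUnit k ∧ HasContinuousLog fun z : S => ((z : ℂ) - a) / (e z : ℂ) ^ k := by
  obtain ⟨k, hk⟩ := exists_hasContinuousLog_div_zpow (f := fun z => (e.symm z : ℂ) - a)
    (by fun_prop) fun z => sub_ne_zero.2 (ne_of_mem_of_not_mem (e.symm z).2 haS)
  have hlog := hk.comp e.continuous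
  simp only [e.symm_apply_apply] at hlog
  refine ⟨k, ?_, hlog⟩
  by_contra hunit
  obtain ⟨p, hp, j, rfl⟩ : ∃ p : ℕ, p.Prime ∧ (p : ℤ) ∣ k := by
    obtain ⟨p, hp, hpk⟩ := Nat.exists_prime_and_dvd (mt Int.isUnit_iff_natAbs_eq.2 hunit)
    exact ⟨p, hp, Int.natCast_dvd.2 hpk⟩
  obtain ⟨w, hw, hwp⟩ : ∃ w : S → ℂ, Continuous w ∧ ∀ z : S, w z ^ p = z - a := by
    have hcoe : Continuous ((↑) : Circle → ℂ) := by fun_prop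
    refine HasContinuousLog.exists_pow_eq (g := fun z => (e z ^ j : Circle)) hp.ne_zero
      (hcoe.comp (e.continuous.zpow j)) (fun z => Circle.coe_ne_zero _) ?_
    simpa only [mul_comm (p : ℤ), zpow_mul, zpow_natCast, ← Circle.coe_zpow] using hlog
  exact not_isBounded_connectedComponentIn_compl_of_pow_eq_sub hS.isCompact hS.isPreconnected haS
    hp.one_lt hw hwp hb

end IsSimpleClosedCurve

lemma exists_circle_extension {X : Type*} [TopologicalSpace X] [NormalSpace X] {S : Set X}
    (hS : IsClosed S) {f : X → ℂ} (hf : Continuous f) (hf0 : ∀ x, f x ≠ 0) {c : S → Circle}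
    (h : HasContinuousLog fun s : S => f s / c s) :
    ∃ C : X → Circle, Continuous C ∧ ∀ s : S, C s = c s := by
  obtain ⟨l, hl, hexp⟩ := h
  obtain ⟨L, hL⟩ := ContinuousMap.exists_restrict_eq hS ⟨l, hl⟩
  let w (x : X) : ℂ := f x / exp (L x)
  have hw : Continuous w := hf.div (by fun_prop) fun x => exp_ne_zero _
  have hw0 (x : X) : w x ≠ 0 := div_ne_zero (hf0 x) (exp_ne_zero _)
  have hwS (s : S) : w s = c s := by
    have hLs : exp (L s) = f s / c s :=
      (congrArg exp (DFunLike.congr_fun hL s)).trans (hexp s)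
    simp only [w, hLs]
    exact div_div_cancel₀ (hf0 s)
  refine ⟨fun x => ⟨NormedSpace.normalize (w x), ?_⟩, ?_, fun s => Circle.ext ?_⟩
  · exact mem_sphere_zero_iff_norm.2 (NormedSpace.norm_normalize (hw0 x))
  · exact (hw.norm.inv₀ fun x => norm_ne_zero_iff.2 (hw0 x)).smul hw |>.subtype_mk _
  · change NormedSpace.normalize (w s) = c s
    rw [hwS, NormedSpace.normalize_eq_self_of_norm_eq_one (Circle.norm_coe _)]

theorem IsSimpleClosedCurve.exists_retraction_complex {S X : Set ℂ} (hS : IsSimpleClosedCurve S)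
    {a : ℂ} (haS : a ∉ S) (hb : IsBounded (connectedComponentIn Sᶜ a)) (haX : a ∉ X) :
    ∃ r : X → S, Continuous r ∧ ∀ x : X, (x : ℂ) ∈ S → (r x : ℂ) = x := by
  obtain ⟨e⟩ := hS.nonempty_homeomorph_circle
  obtain ⟨k, hk, hlog⟩ := hS.exists_isUnit_hasContinuousLog_div_zpow e haS hb
  let ι (x : ((↑) : X → ℂ) ⁻¹' S) : S := ⟨x, x.2⟩
  have hι : Continuous ι := by fun_prop
  obtain ⟨C, hC, hCe⟩ := exists_circle_extension (f := fun x : X => (x : ℂ) - a)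
    (c := fun x => e (ι x) ^ k) (hS.isCompact.isClosed.preimage continuous_subtype_val)
    (by fun_prop) (fun x => sub_ne_zero.2 (ne_of_mem_of_not_mem x.2 haX)) (hlog.comp hι)
  refine ⟨fun x => e.symm (C x ^ k), by fun_prop, fun x hx => ?_⟩
  have hCx : C x = e ⟨x, hx⟩ ^ k := hCe ⟨x, hx⟩
  simp only [hCx, ← zpow_mul, Int.isUnit_mul_self hk, zpow_one, e.symm_apply_apply]

end SimpleClosedCurve

theorem stmt_9_general {E : Type*} [NormedAddCommGroup E] [NormedSpace ℝ E]
    (hE : Module.finrank ℝ E = 2) {S X : Set E} (hS : IsSimpleClosedCurve S) {a : E} (haS : a ∉ S)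
    (hbdd : Bornology.IsBounded (connectedComponentIn Sᶜ a)) (haX : a ∉ X) :
    ∃ r : X → S, Continuous r ∧ ∀ x : X, (x : E) ∈ S → (r x : E) = x := by
  have : FiniteDimensional ℝ E := Module.finite_of_finrank_eq_succ hE
  let L : E ≃L[ℝ] ℂ :=
    ContinuousLinearEquiv.ofFinrankEq (hE.trans Complex.finrank_real_complex.symm)
  let φ : E ≃ₜ ℂ := L.toHomeomorph
  have hb : Bornology.IsBounded (connectedComponentIn (φ '' S)ᶜ (φ a)) := by
    rw [← Set.image_compl_eq φ.bijective, ← φ.image_connectedComponentIn haS]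
    exact L.lipschitz.isBounded_image hbdd
  obtain ⟨r, hr, hrS⟩ := (hS.image φ).exists_retraction_complex (X := φ '' X)
    (mt φ.injective.mem_set_image.1 haS) hb (mt φ.injective.mem_set_image.1 haX)
  refine ⟨fun x => (φ.image S).symm (r (φ.image X x)), by fun_prop, fun x hx => φ.injective ?_⟩
  calc φ ((φ.image S).symm (r (φ.image X x)))
      = r (φ.image X x) := congrArg Subtype.val ((φ.image S).apply_symm_apply _)
    _ = φ x := hrS _ (Set.mem_image_of_mem φ hx)

/-- If a set `X` contains a simple closed curve `S` and misses a point of the bounded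
component of the complement of `S`, then `S` is a retract of `X`. -/
theorem stmt_9 (S X : Set (EuclideanSpace ℝ (Fin 2)))
    (hS : IsSimpleClosedCurve S) (hSX : S ⊆ X)
    (a : EuclideanSpace ℝ (Fin 2)) (haS : a ∉ S)
    (hbdd : Bornology.IsBounded (connectedComponentIn Sᶜ a))
    (haX : a ∉ X) :
    ∃ r : X → S, Continuous r ∧
      ∀ x : X, (x : EuclideanSpace ℝ (Fin 2)) ∈ S → (r x : EuclideanSpace ℝ (Fin 2)) = x :=
  stmt_9_general finrank_euclideanSpace_fin hS haS hbdd haX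
end

section
/- Let X be a locally connected one-dimensional metric continuum. If X has the weak local periodic point property (wLPPP), then X is a local dendrite. -/
/-!
Let `S` be a simple closed curve inside a member `B` of the basis given by the weak local periodic
point property. Since `X` has dimension at most one, maps from closed subsets of `X` into the circle
extend to `X`, so there is a retraction of `X` onto `S`. Following it by an irrational rotation of
`S` gives a map `X → S ⊆ B` without periodic points, a contradiction. So `B` contains no simple
closed curve, and any locally connected subcontinuum of `B` that is a neighbourhood of a given point
is a dendrite. To find one, start from the point and repeatedly add the members of finite covers by
connected open sets of geometrically decreasing diameters: the resulting set has Sierpiński's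
property S, hence its closure is locally connected.
-/

open Set Filter Topology Function
open scoped Uniformity RealInnerProductSpace

/-! ### Property S and local connectedness -/

section PropertyS

/-- Sierpiński's *property S*: `N` is, for every entourage `V`, a finite union of connected sets of
size at most `V`. Closures of such sets are used below as locally connected neighbourhoods; the
union may include empty sets, so only preconnectedness is asked of the pieces. -/
def HasPropertyS {X : Type*} [UniformSpace X] (N : Set X) : Prop :=
  ∀ V ∈ 𝓤 X, ∃ T : Set (Set X), T.Finite ∧ ⋃₀ T = N ∧
    ∀ W ∈ T, IsPreconnected W ∧ W ×ˢ W ⊆ V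

variable {X : Type*} [UniformSpace X] {N : Set X}

theorem HasPropertyS.exists_closure_prod_subset (hN : HasPropertyS N) {V : Set (X × X)}
    (hV : V ∈ 𝓤 X) : ∃ T : Set (Set X), T.Finite ∧ ⋃₀ T = N ∧
      ∀ W ∈ T, IsPreconnected W ∧ closure W ×ˢ closure W ⊆ V := by
  obtain ⟨V', ⟨hV', hclosed⟩, hV'V⟩ := uniformity_hasBasis_closed.mem_iff.1 hV
  obtain ⟨T, hT, hTN, hTV⟩ := hN V' hV'
  refine ⟨T, hT, hTN, fun W hW => ⟨(hTV W hW).1, ?_⟩⟩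
  rw [← closure_prod_eq]
  exact (closure_minimal (hTV W hW).2 hclosed).trans hV'V

protected theorem HasPropertyS.closure (hN : HasPropertyS N) : HasPropertyS (closure N) := by
  intro V hV
  obtain ⟨T, hT, rfl, hTV⟩ := hN.exists_closure_prod_subset hV
  refine ⟨_root_.closure '' T, hT.image _, ?_, ?_⟩
  · rw [hT.closure_sUnion, sUnion_image]
  · rintro _ ⟨W, hW, rfl⟩
    exact ⟨(hTV W hW).1.closure, (hTV W hW).2⟩

theorem HasPropertyS.locallyConnectedSpace (hN : HasPropertyS N) : LocallyConnectedSpace N := by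
  rw [locallyConnectedSpace_iff_connected_subsets]
  intro x U hU
  obtain ⟨V, hV, hVU⟩ : ∃ V ∈ 𝓤 X, ((↑) : N → X) ⁻¹' UniformSpace.ball (x : X) V ⊆ U := by
    obtain ⟨U', hU', hU'U⟩ := mem_nhds_subtype N x U |>.1 hU
    obtain ⟨V, hV, hVU'⟩ := UniformSpace.mem_nhds_iff.1 hU'
    exact ⟨V, hV, (preimage_mono hVU').trans hU'U⟩
  obtain ⟨T, hT, hTN, hTV⟩ := hN.exists_closure_prod_subset hV
  -- The pieces adherent to `x` stay connected after adding `x`, and all other pieces miss a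
  -- neighbourhood of `x`.
  let G : Set X := ⋃₀ (insert (x : X) '' {W ∈ T | (x : X) ∈ closure W})
  have hGN : G ⊆ N := by
    rintro y ⟨_, ⟨W, hW, rfl⟩, rfl | hy⟩
    · exact x.2
    · exact hTN ▸ ⟨W, hW.1, hy⟩
  have hG : IsPreconnected G := by
    refine isPreconnected_sUnion (x : X) _ ?_ ?_
    · rintro _ ⟨W, -, rfl⟩
      exact mem_insert _ _
    · rintro _ ⟨W, hW, rfl⟩
      exact (hTV W hW.1).1.subset_closure (subset_insert _ _)
        (insert_subset hW.2 subset_closure)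
  have hG_nhds : G ∈ 𝓝[N] (x : X) := by
    have hclosed : IsClosed (⋃ W ∈ {W ∈ T | (x : X) ∉ closure W}, closure W) :=
      (hT.subset (sep_subset _ _)).isClosed_biUnion fun _ _ => isClosed_closure
    have hx : (x : X) ∉ ⋃ W ∈ {W ∈ T | (x : X) ∉ closure W}, closure W := by
      simp only [mem_iUnion, not_exists]
      exact fun W hW => hW.2
    filter_upwards [mem_nhdsWithin_of_mem_nhds (hclosed.isOpen_compl.mem_nhds hx),
      self_mem_nhdsWithin] with y hy hyN
    obtain ⟨W, hW, hyW⟩ := hTN.symm ▸ hyN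
    by_cases hxW : (x : X) ∈ closure W
    · exact ⟨_, ⟨W, ⟨hW, hxW⟩, rfl⟩, mem_insert_of_mem _ hyW⟩
    · exact (hy (mem_biUnion ⟨hW, hxW⟩ (subset_closure hyW))).elim
  refine ⟨(↑) ⁻¹' G, preimage_coe_mem_nhds_subtype.2 hG_nhds, ?_, Subset.trans ?_ hVU⟩
  · rwa [← IsInducing.subtypeVal.isPreconnected_image, Subtype.image_preimage_coe,
      inter_eq_self_of_subset_right hGN]
  · rintro y ⟨_, ⟨W, hW, rfl⟩, hyx | hy⟩
    · rw [mem_preimage, hyx]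
      exact UniformSpace.mem_ball_self _ hV
    · exact (hTV W hW.1).2 ⟨hW.2, subset_closure hy⟩

end PropertyS

/-! ### Star hulls -/

section StarHull

variable {X : Type*}

/-- The star of `A` with respect to a family `𝒰` of sets: `A` together with all members of `𝒰` that
meet `A`. Including `A` itself makes stars increasing even when `𝒰` is not a cover. -/
def coverStar (𝒰 : Set (Set X)) (A : Set X) : Set X :=
  A ∪ ⋃₀ {U ∈ 𝒰 | (U ∩ A).Nonempty}

/-- The iterated star of `A`: the families `C 0, …, C (n - 1)` are applied in this order. -/
def iterStar (C : ℕ → Set (Set X)) (A : Set X) : ℕ → Set X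
  | 0 => A
  | n + 1 => coverStar (C n) (iterStar C A n)

/-- The union of all iterated stars of `A`. For families `C n` of connected sets whose diameters
decrease geometrically, it is a small connected enlargement of `A` having property S. -/
def starHull (C : ℕ → Set (Set X)) (A : Set X) : Set X :=
  ⋃ n, iterStar C A n

variable {𝒰 : Set (Set X)} {C : ℕ → Set (Set X)} {A : Set X}

theorem coverStar_eq_sUnion (hA : A ⊆ ⋃₀ 𝒰) :
    coverStar 𝒰 A = ⋃₀ {U ∈ 𝒰 | (U ∩ A).Nonempty} := by
  refine union_eq_self_of_subset_left fun a ha => ?_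
  obtain ⟨U, hU, haU⟩ := hA ha
  exact ⟨U, ⟨hU, a, haU, ha⟩, haU⟩

theorem coverStar_iUnion {ι : Sort*} (A : ι → Set X) :
    coverStar 𝒰 (⋃ i, A i) = ⋃ i, coverStar 𝒰 (A i) := by
  ext x
  simp only [coverStar, mem_union, mem_iUnion, mem_sUnion, mem_ofPred_eq, inter_iUnion,
    nonempty_iUnion, exists_or]
  grind

theorem iterStar_iUnion {ι : Sort*} (A : ι → Set X) (n : ℕ) :
    iterStar C (⋃ i, A i) n = ⋃ i, iterStar C (A i) n := by
  induction n with
  | zero => rfl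
  | succ n ih => simp only [iterStar, ih, coverStar_iUnion]

theorem starHull_iUnion {ι : Sort*} (A : ι → Set X) :
    starHull C (⋃ i, A i) = ⋃ i, starHull C (A i) := by
  simp only [starHull, iterStar_iUnion]
  exact iUnion_comm _

theorem iterStar_mono : Monotone (iterStar C A) :=
  monotone_nat_of_le_succ fun _ => subset_union_left

theorem iterStar_subset_starHull (n : ℕ) : iterStar C A n ⊆ starHull C A :=
  subset_iUnion _ n

theorem iterStar_add (n k : ℕ) :
    iterStar C A (k + n) = iterStar (fun i => C (i + n)) (iterStar C A n) k := by
  induction k with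
  | zero => rw [Nat.zero_add]; rfl
  | succ k ih => rw [Nat.add_right_comm, iterStar, ih, iterStar]

theorem starHull_eq_starHull_iterStar (n : ℕ) :
    starHull C A = starHull (fun i => C (i + n)) (iterStar C A n) := by
  simp only [starHull, ← iterStar_add]
  exact (iterStar_mono.iSup_nat_add n).symm

section Connected

variable [TopologicalSpace X]

theorem isPreconnected_coverStar (h𝒰 : ∀ U ∈ 𝒰, IsPreconnected U) (hA : IsPreconnected A) :
    IsPreconnected (coverStar 𝒰 A) := by
  rcases A.eq_empty_or_nonempty with rfl | ⟨a, ha⟩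
  · simpa [coverStar] using hA
  refine isPreconnected_of_forall a ?_
  rintro y (hy | ⟨U, ⟨hU, z, hzU, hzA⟩, hy⟩)
  · exact ⟨A, subset_union_left, ha, hy, hA⟩
  · exact ⟨A ∪ U, union_subset_union_right A (subset_sUnion_of_mem ⟨hU, z, hzU, hzA⟩), .inl ha,
      .inr hy, hA.union z hzA hzU (h𝒰 U hU)⟩

theorem isPreconnected_starHull (hC : ∀ n, ∀ U ∈ C n, IsPreconnected U) (hA : IsPreconnected A) :
    IsPreconnected (starHull C A) := by
  have h_iter (n : ℕ) : IsPreconnected (iterStar C A n) := by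
    induction n with
    | zero => exact hA
    | succ n ih => exact isPreconnected_coverStar (hC n) ih
  exact IsPreconnected.sUnion_directed iterStar_mono.directed_le.directedOn_range
    (forall_mem_range.2 h_iter)

end Connected

section Metric

variable [PseudoMetricSpace X] {r : ℝ}

theorem exists_dist_le_of_mem_starHull (hr : 0 ≤ r)
    (hC : ∀ n, ∀ U ∈ C n, ∀ x ∈ U, ∀ y ∈ U, dist x y ≤ r * (1 / 2) ^ n) {y : X}
    (hy : y ∈ starHull C A) : ∃ a ∈ A, dist y a ≤ 2 * r := by
  have h_iter (n : ℕ) : ∀ y ∈ iterStar C A n, ∃ a ∈ A, dist y a ≤ 2 * r * (1 - (1 / 2) ^ n) := by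
    induction n with
    | zero => exact fun y hy => ⟨y, hy, by simp⟩
    | succ n ih =>
      have hrn : 0 ≤ r * (1 / 2) ^ n := by positivity
      rintro y (hy | ⟨U, ⟨hU, z, hzU, hz⟩, hyU⟩)
      · obtain ⟨a, ha, hya⟩ := ih y hy
        exact ⟨a, ha, by rw [pow_succ]; linarith⟩
      · obtain ⟨a, ha, hza⟩ := ih z hz
        refine ⟨a, ha, (dist_triangle y z a).trans ?_⟩
        have hyz := hC n U hU y hyU z hzU
        rw [pow_succ]
        linarith
  obtain ⟨n, hn⟩ := mem_iUnion.1 hy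
  obtain ⟨a, ha, hya⟩ := h_iter n y hn
  refine ⟨a, ha, hya.trans (mul_le_of_le_one_right (by positivity) ?_)⟩
  linarith [pow_nonneg (one_half_pos (α := ℝ)).le n]

theorem dist_le_of_mem_starHull_succ {n : ℕ} (hr : 0 ≤ r)
    (hC : ∀ n, ∀ U ∈ C n, ∀ x ∈ U, ∀ y ∈ U, dist x y ≤ r * (1 / 2) ^ n) {U : Set X} (hU : U ∈ C n)
    {x y : X} (hx : x ∈ starHull (fun i => C (i + (n + 1))) U)
    (hy : y ∈ starHull (fun i => C (i + (n + 1))) U) : dist x y ≤ 3 * r * (1 / 2) ^ n := by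
  have hC' : ∀ i, ∀ U ∈ C (i + (n + 1)), ∀ x ∈ U, ∀ y ∈ U,
      dist x y ≤ r * (1 / 2) ^ (n + 1) * (1 / 2) ^ i := by
    intro i
    rw [mul_assoc, ← pow_add, add_comm (n + 1)]
    exact hC _
  obtain ⟨a, ha, hxa⟩ := exists_dist_le_of_mem_starHull (by positivity) hC' hx
  obtain ⟨b, hb, hyb⟩ := exists_dist_le_of_mem_starHull (by positivity) hC' hy
  have hab := hC n U hU a ha b hb
  have htri := dist_triangle4_right x y a b
  rw [pow_succ] at hxa hyb
  linarith

theorem hasPropertyS_starHull (hr : 0 ≤ r) (hfin : ∀ n, (C n).Finite)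
    (hconn : ∀ n, ∀ U ∈ C n, IsPreconnected U)
    (hdist : ∀ n, ∀ U ∈ C n, ∀ x ∈ U, ∀ y ∈ U, dist x y ≤ r * (1 / 2) ^ n)
    (hcover : ∀ n, starHull C A ⊆ ⋃₀ C n) : HasPropertyS (starHull C A) := by
  intro V hV
  obtain ⟨ε, hε, hεV⟩ := Metric.mem_uniformity_dist.1 hV
  obtain ⟨n, hn⟩ : ∃ n : ℕ, 3 * r * (1 / 2) ^ n < ε := by
    have hlim : Tendsto (fun n : ℕ => 3 * r * (1 / 2) ^ n) atTop (𝓝 (3 * r * 0)) :=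
      (tendsto_pow_atTop_nhds_zero_of_lt_one (by norm_num) (by norm_num)).const_mul _
    rw [mul_zero] at hlim
    exact (hlim.eventually_lt_const hε).exists
  let T : Set (Set X) := {U ∈ C n | (U ∩ iterStar C A n).Nonempty}
  have hT : starHull C A = ⋃ U : T, starHull (fun i => C (i + (n + 1))) U := by
    rw [starHull_eq_starHull_iterStar (n + 1), iterStar,
      coverStar_eq_sUnion ((iterStar_subset_starHull n).trans (hcover n)), sUnion_eq_iUnion,
      starHull_iUnion]
  refine ⟨starHull (fun i => C (i + (n + 1))) '' T,
    ((hfin n).subset (sep_subset _ _)).image _, ?_, ?_⟩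
  · rw [hT, sUnion_image, biUnion_eq_iUnion]
  · rintro _ ⟨U, hU, rfl⟩
    refine ⟨isPreconnected_starHull (fun i => hconn _) (hconn n U hU.1), ?_⟩
    rintro ⟨x, y⟩ ⟨hx, hy⟩
    exact hεV ((dist_le_of_mem_starHull_succ hr hdist hU.1 hx hy).trans_lt hn)

theorem exists_finite_cover_isOpen_isPreconnected_of_isCompact [LocallyConnectedSpace X]
    {K : Set X} (hK : IsCompact K) (hr : 0 < r) :
    ∃ T : Set (Set X), T.Finite ∧ K ⊆ ⋃₀ T ∧ (∀ U ∈ T, IsOpen U ∧ IsPreconnected U) ∧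
      ∀ U ∈ T, ∀ x ∈ U, ∀ y ∈ U, dist x y ≤ r := by
  choose U hU_ball hU_open hxU hU_conn using fun x : X =>
    locallyConnectedSpace_iff_subsets_isOpen_isConnected.1 inferInstance x _
      (Metric.ball_mem_nhds x (half_pos hr))
  obtain ⟨t, ht⟩ := hK.elim_finite_subcover U hU_open fun x _ => mem_iUnion.2 ⟨x, hxU x⟩
  refine ⟨U '' t, t.finite_toSet.image _, ?_, ?_, ?_⟩
  · rwa [sUnion_image]
  · rintro _ ⟨x, -, rfl⟩
    exact ⟨hU_open x, (hU_conn x).isPreconnected⟩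
  · rintro _ ⟨x, -, rfl⟩ a ha b hb
    linarith [dist_triangle_right a b x, Metric.mem_ball.1 (hU_ball x ha),
      Metric.mem_ball.1 (hU_ball x hb)]

theorem exists_mem_nhds_isCompact_isConnected_locallyConnectedSpace [LocallyCompactSpace X]
    [LocallyConnectedSpace X] {p : X} {W : Set X} (hW : W ∈ 𝓝 p) :
    ∃ N ∈ 𝓝 p, N ⊆ W ∧ IsClosed N ∧ IsCompact N ∧ IsConnected N ∧ LocallyConnectedSpace N := by
  obtain ⟨K, hK_nhds, hKW, hK⟩ := local_compact_nhds hW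
  obtain ⟨ε, hε, hεK⟩ := Metric.nhds_basis_closedBall.mem_iff.1 hK_nhds
  have hr : 0 < ε / 2 := half_pos hε
  choose C hfin hcover hC hdist using fun n : ℕ =>
    exists_finite_cover_isOpen_isPreconnected_of_isCompact hK
      (show 0 < ε / 2 * (1 / 2) ^ n by positivity)
  have hconn : ∀ n, ∀ U ∈ C n, IsPreconnected U := fun n U hU => (hC n U hU).2
  have hp : p ∈ starHull C {p} := iterStar_subset_starHull 0 rfl
  have h_ball : starHull C {p} ⊆ Metric.closedBall p ε := by
    intro y hy
    obtain ⟨a, rfl, hya⟩ := exists_dist_le_of_mem_starHull hr.le hdist hy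
    rwa [mul_div_cancel₀ _ two_ne_zero] at hya
  have h_nhds : starHull C {p} ∈ 𝓝 p := by
    obtain ⟨U, hU, hpU⟩ := hcover 0 (mem_of_mem_nhds hK_nhds)
    have hU_star : U ⊆ iterStar C {p} 1 := fun x hx => .inr ⟨U, ⟨hU, p, hpU, rfl⟩, hx⟩
    exact mem_of_superset ((hC 0 U hU).1.mem_nhds hpU)
      (hU_star.trans (iterStar_subset_starHull 1))
  have h_conn : IsConnected (starHull C {p}) :=
    ⟨⟨p, hp⟩, isPreconnected_starHull hconn isPreconnected_singleton⟩
  have hS : HasPropertyS (starHull C {p}) := hasPropertyS_starHull hr.le hfin hconn hdist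
    fun n => (h_ball.trans hεK).trans (hcover n)
  have h_closure : closure (starHull C {p}) ⊆ K :=
    (closure_minimal h_ball Metric.isClosed_closedBall).trans hεK
  exact ⟨_, mem_of_superset h_nhds subset_closure, h_closure.trans hKW, isClosed_closure,
    hK.of_isClosed_subset isClosed_closure h_closure, h_conn.closure,
    hS.closure.locallyConnectedSpace⟩

end Metric

end StarHull

/-! ### Extension of maps into spheres -/

section SimplexVertex

variable {ι : Type*} [Fintype ι] [DecidableEq ι]

/-- The standard basis of `ℝ^ι` together with minus the sum of its members: the vertices of a
simplex of dimension `card ι` whose barycentre is the origin. -/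
noncomputable def simplexVertex : Option ι → EuclideanSpace ℝ ι
  | none => -∑ i, EuclideanSpace.single i 1
  | some i => EuclideanSpace.single i 1

theorem sum_smul_simplexVertex_apply (w : Option ι → ℝ) (i : ι) :
    (∑ k, w k • simplexVertex k) i = w (some i) - w none := by
  simp only [simplexVertex, Fintype.sum_option, smul_neg, PiLp.add_apply, PiLp.neg_apply,
    PiLp.smul_apply, WithLp.ofLp_sum, PiLp.ofLp_single, Finset.sum_apply, Pi.single_apply,
    Finset.sum_ite_eq, Finset.mem_univ, ↓reduceIte, smul_eq_mul, mul_one, WithLp.ofLp_smul,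
    Pi.smul_apply, mul_ite, mul_zero]
  ring

theorem sum_smul_simplexVertex_ne_zero {w : Option ι → ℝ} (hw : ∑ k, w k = 1)
    (hw₀ : ∃ k, w k = 0) : ∑ k, w k • simplexVertex k ≠ 0 := by
  intro h
  have h_const : ∀ k, w k = w none := by
    rintro (_ | i)
    · rfl
    · rw [← sub_eq_zero, ← sum_smul_simplexVertex_apply, h]
      rfl
  obtain ⟨k, hk⟩ := hw₀
  have hw_zero : ∀ k, w k = 0 := fun j => by rw [h_const, ← h_const k, hk]
  simp [hw_zero] at hw

theorem exists_inner_simplexVertex_pos {v : EuclideanSpace ℝ ι} (hv : v ≠ 0) :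
    ∃ k, 0 < ⟪simplexVertex k, v⟫ := by
  by_contra! h
  have h_sum : ∑ i, v i ≥ 0 := by
    simpa [simplexVertex, inner_neg_left, sum_inner, EuclideanSpace.inner_single_left] using h none
  have h_nonpos : ∀ i, v i ≤ 0 := fun i => by
    simpa [simplexVertex, EuclideanSpace.inner_single_left] using h (some i)
  refine hv (PiLp.ext fun i => ?_)
  refine (Finset.sum_eq_zero_iff_of_nonpos fun i _ => h_nonpos i).1 ?_ i (Finset.mem_univ i)
  exact le_antisymm (Finset.sum_nonpos fun i _ => h_nonpos i) h_sum

end SimplexVertex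

section Extension

variable {X : Type*} [TopologicalSpace X] [NormalSpace X] {A : Set X} {n : ℕ}

theorem CoveringDimLE.exists_partitionOfUnity (hX : CoveringDimLE X n) {κ : Type} [Fintype κ]
    (hκ : n + 1 < Fintype.card κ) {U : κ → Set X} (hU : ∀ k, IsOpen (U k))
    (hU_cover : ⋃ k, U k = univ) :
    ∃ φ : PartitionOfUnity κ X, φ.IsSubordinate U ∧ ∀ x, ∃ k, φ k x = 0 := by
  obtain ⟨V, hV, hVU, hV_cover, hV_order⟩ := hX κ U hU hU_cover
  obtain ⟨φ, hφ⟩ := PartitionOfUnity.exists_isSubordinate_of_locallyFinite isClosed_univ V hV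
    (locallyFinite_of_finite V) hV_cover.ge
  refine ⟨φ, fun k => (hφ k).trans (hVU k), fun x => ?_⟩
  by_contra! h_ne
  have h_all : {k | x ∈ V k} = univ :=
    eq_univ_of_forall fun k => hφ k (subset_tsupport _ (h_ne k))
  have h_card := hV_order x
  rw [h_all, ncard_univ, Nat.card_eq_fintype_card] at h_card
  omega

theorem CoveringDimLE.exists_ne_zero_inner_pos (hX : CoveringDimLE X n) {ι : Type} [Fintype ι]
    (hι : n < Fintype.card ι) (hA : IsClosed A) (g : C(A, EuclideanSpace ℝ ι))
    (hg : ∀ a, g a ≠ 0) :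
    ∃ F : C(X, EuclideanSpace ℝ ι), (∀ x, F x ≠ 0) ∧ ∀ a : A, 0 < ⟪F a, g a⟫ := by
  classical
  let U : Option ι → Set X := fun k => ((↑) '' {a : A | ⟪simplexVertex k, g a⟫ ≤ 0})ᶜ
  have hU (k : Option ι) : IsOpen (U k) :=
    (hA.isClosedEmbedding_subtypeVal.isClosedMap _
      (isClosed_le (by fun_prop) continuous_const)).isOpen_compl
  have mem_U {k : Option ι} {a : A} : (a : X) ∈ U k ↔ 0 < ⟪simplexVertex k, g a⟫ := by
    simp [U]
  have hU_cover : ⋃ k, U k = univ := by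
    refine eq_univ_of_forall fun x => mem_iUnion.2 ?_
    by_cases hx : x ∈ A
    · exact (exists_inner_simplexVertex_pos (hg ⟨x, hx⟩)).imp fun k hk => mem_U.2 hk
    · exact ⟨none, fun ⟨a, _, hax⟩ => hx (hax ▸ a.2)⟩
  -- One barycentric coordinate vanishes at each point, so the partition of unity maps `X` into the
  -- boundary of the simplex, which does not contain the origin.
  obtain ⟨φ, hφU, hφ₀⟩ := hX.exists_partitionOfUnity (by simpa using hι) hU hU_cover
  have hφ_sum (x : X) : ∑ k, φ k x = 1 := by
    rw [← finsum_eq_sum_of_fintype, φ.sum_eq_one (mem_univ x)]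
  refine ⟨⟨fun x => ∑ k, φ k x • simplexVertex k, by fun_prop⟩,
    fun x => sum_smul_simplexVertex_ne_zero (hφ_sum x) (hφ₀ x), fun a => ?_⟩
  have h_pos {k : Option ι} (hk : φ k a ≠ 0) : 0 < φ k a * ⟪simplexVertex k, g a⟫ :=
    mul_pos ((φ.nonneg k a).lt_of_ne' hk) (mem_U.1 (hφU k (subset_tsupport _ hk)))
  obtain ⟨k, hk⟩ : ∃ k, φ k a ≠ 0 := by
    by_contra! h
    simpa [h] using hφ_sum a
  simp only [ContinuousMap.coe_mk, sum_inner, real_inner_smul_left]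
  refine Finset.sum_pos' (fun j _ => ?_) ⟨k, Finset.mem_univ k, h_pos hk⟩
  by_cases hj : φ j a = 0
  · simp [hj]
  · exact (h_pos hj).le

theorem exists_restrict_eq_of_inner_pos {E : Type*} [NormedAddCommGroup E] [InnerProductSpace ℝ E]
    [FiniteDimensional ℝ E] (hA : IsClosed A) (g : C(A, E)) (F : C(X, E)) (hF : ∀ x, F x ≠ 0)
    (hFg : ∀ a : A, 0 < ⟪F a, g a⟫) : ∃ f : C(X, E), f.restrict A = g ∧ ∀ x, f x ≠ 0 := by
  obtain ⟨G, hG⟩ := ContinuousMap.exists_restrict_eq hA g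
  have hGA (a : A) : G a = g a := DFunLike.congr_fun hG a
  -- The segments from `F x` to `G x` with `0 < ⟪F x, G x⟫` avoid the origin.
  obtain ⟨u, hu₀, hu₁, hu⟩ := exists_continuous_zero_one_of_isClosed
    (s := {x | ⟪F x, G x⟫ ≤ 0}) (isClosed_le (by fun_prop) continuous_const) hA
    (disjoint_left.2 fun x hx hxA => (hFg ⟨x, hxA⟩).not_ge (hGA ⟨x, hxA⟩ ▸ hx))
  refine ⟨⟨fun x => (1 - u x) • F x + u x • G x, by fun_prop⟩, ?_, fun x hx => ?_⟩
  · ext a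
    simp [hu₁ a.2, hGA]
  · have h_inner : (1 - u x) * ⟪F x, F x⟫ + u x * ⟪F x, G x⟫ = 0 := by
      rw [← real_inner_smul_right, ← real_inner_smul_right, ← inner_add_right]
      exact (congrArg _ hx).trans (inner_zero_right _)
    have hFF : 0 < ⟪F x, F x⟫ := real_inner_self_pos.2 (hF x)
    rcases le_or_gt ⟪F x, G x⟫ 0 with h | h
    · have hux : u x = 0 := hu₀ h
      simp only [hux, sub_zero, one_mul, zero_mul, add_zero] at h_inner
      exact hFF.ne' h_inner
    · obtain ⟨hu_nonneg, hu_le⟩ := hu x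
      rcases hu_nonneg.eq_or_lt' with hux | hux
      · simp only [hux, sub_zero, one_mul, zero_mul, add_zero] at h_inner
        exact hFF.ne' h_inner
      · nlinarith [mul_pos hux h, mul_nonneg (sub_nonneg.2 hu_le) hFF.le]

theorem CoveringDimLE.exists_restrict_eq_sphere (hX : CoveringDimLE X n) {ι : Type} [Fintype ι]
    (hι : n < Fintype.card ι) (hA : IsClosed A)
    (g : C(A, Metric.sphere (0 : EuclideanSpace ℝ ι) 1)) :
    ∃ f : C(X, Metric.sphere (0 : EuclideanSpace ℝ ι) 1), f.restrict A = g := by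
  let g' : C(A, EuclideanSpace ℝ ι) := ⟨fun a => g a, by fun_prop⟩
  obtain ⟨F, hF, hFg⟩ := hX.exists_ne_zero_inner_pos hι hA g'
    fun a => ne_zero_of_mem_unit_sphere (g a)
  obtain ⟨f, hfg, hf⟩ := exists_restrict_eq_of_inner_pos hA g' F hF hFg
  have hfA (a : A) : f a = g a := DFunLike.congr_fun hfg a
  refine ⟨⟨fun x => ⟨‖f x‖⁻¹ • f x, ?_⟩, ?_⟩, ?_⟩
  · rw [mem_sphere_zero_iff_norm, norm_smul, norm_inv, norm_norm,
      inv_mul_cancel₀ (norm_ne_zero_iff.2 (hf x))]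
  · exact ((f.continuous.norm.inv₀ fun x => norm_ne_zero_iff.2 (hf x)).smul
      f.continuous).subtype_mk _
  · ext1 a
    exact Subtype.ext (by simp [hfA])

end Extension

/-! ### Simple closed curves -/

section SimpleClosedCurve

theorem not_isOfFinOrder_circleExp_one : ¬ IsOfFinOrder (Circle.exp 1) := by
  rw [isOfFinOrder_iff_pow_eq_one]
  rintro ⟨n, hn, h⟩
  rw [← Circle.exp_nsmul, Circle.exp_eq_one] at h
  obtain ⟨k, hk⟩ := h
  have hk₀ : k ≠ 0 := by
    rintro rfl
    simp [hn.ne'] at hk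
  refine ((irrational_pi.mul_natCast two_ne_zero).intCast_mul hk₀).ne_nat n ?_
  rw [Nat.cast_ofNat, mul_comm Real.pi, ← hk, nsmul_one]

theorem periodicPts_mul_left_eq_empty {M : Type*} [RightCancelMonoid M] {a : M}
    (ha : ¬ IsOfFinOrder a) : periodicPts (a * ·) = ∅ := by
  refine eq_empty_of_forall_notMem fun x ⟨n, hn, hx⟩ => ha ?_
  rw [IsPeriodicPt, IsFixedPt, mul_left_iterate] at hx
  exact isOfFinOrder_iff_pow_eq_one.2 ⟨n, hn, mul_eq_right.1 hx⟩

/-- The unit sphere of the Euclidean plane, as used in `IsSimpleClosedCurve`, is homeomorphic to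
Mathlib's `Circle`, whose group structure provides rotations. -/
noncomputable def sphereHomeomorphCircle :
    Metric.sphere (0 : EuclideanSpace ℝ (Fin 2)) 1 ≃ₜ Circle :=
  Complex.orthonormalBasisOneI.repr.symm.toHomeomorph.subtype fun x => by
    rw [mem_sphere_zero_iff_norm, ← Complex.orthonormalBasisOneI.repr.symm.norm_map x]
    exact mem_sphere_zero_iff_norm.symm

variable {X : Type*} [TopologicalSpace X] {S : Set X}

theorem IsSimpleClosedCurve.isClosed [T2Space X] (hS : IsSimpleClosedCurve S) : IsClosed S := by
  obtain ⟨e⟩ := hS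
  have : CompactSpace S := e.symm.compactSpace
  exact (isCompact_iff_compactSpace.2 this).isClosed

theorem IsSimpleClosedCurve.exists_periodicPts_eq_empty (hS : IsSimpleClosedCurve S) :
    ∃ ρ : C(S, S), periodicPts ρ = ∅ := by
  obtain ⟨e⟩ := hS
  let h : S ≃ₜ Circle := e.trans sphereHomeomorphCircle
  let ρ : C(S, S) := ⟨fun s => h.symm (Circle.exp 1 * h s), by fun_prop⟩
  have h_semiconj : Semiconj h ρ (Circle.exp 1 * ·) := fun s => h.apply_symm_apply _
  refine ⟨ρ, eq_empty_of_forall_notMem fun s hs => ?_⟩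
  simpa [periodicPts_mul_left_eq_empty not_isOfFinOrder_circleExp_one] using
    h_semiconj.mapsTo_periodicPts hs

theorem IsSimpleClosedCurve.exists_retraction [T4Space X] (hX : CoveringDimLE X 1)
    (hS : IsSimpleClosedCurve S) : ∃ r : C(X, S), r.restrict S = .id S := by
  have hS_closed := hS.isClosed
  obtain ⟨e⟩ := hS
  obtain ⟨f, hf⟩ := hX.exists_restrict_eq_sphere (ι := Fin 2) (by simp) hS_closed
    ⟨e, e.continuous⟩
  refine ⟨⟨fun x => e.symm (f x), by fun_prop⟩, ?_⟩
  ext1 s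
  simpa using congrArg e.symm (DFunLike.congr_fun hf s)

theorem IsSimpleClosedCurve.exists_range_subset_periodicPts_eq_empty [T4Space X]
    (hX : CoveringDimLE X 1) (hS : IsSimpleClosedCurve S) :
    ∃ f : C(X, X), range f ⊆ S ∧ periodicPts f = ∅ := by
  obtain ⟨r, hr⟩ := hS.exists_retraction hX
  obtain ⟨ρ, hρ⟩ := hS.exists_periodicPts_eq_empty
  let f : C(X, X) := ⟨fun x => ρ (r x), by fun_prop⟩
  have h_semiconj : Semiconj r f ρ := fun x => DFunLike.congr_fun hr (ρ (r x))
  refine ⟨f, range_subset_iff.2 fun x => (ρ (r x)).2, eq_empty_of_forall_notMem fun x hx => ?_⟩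
  simpa [hρ] using h_semiconj.mapsTo_periodicPts hx

theorem HasWLPPP.exists_mem_nhds_forall_not_isSimpleClosedCurve [T4Space X]
    (hX : CoveringDimLE X 1) (h : HasWLPPP X) (x : X) :
    ∃ B ∈ 𝓝 x, ∀ S ⊆ B, ¬ IsSimpleClosedCurve S := by
  obtain ⟨𝓑, h_basis, h𝓑⟩ := h
  obtain ⟨B, hB, hxB, -⟩ := h_basis.exists_subset_of_mem_open (mem_univ x) isOpen_univ
  refine ⟨B, (h_basis.isOpen hB).mem_nhds hxB, fun S hSB hS => ?_⟩
  obtain ⟨f, hfS, hf⟩ := hS.exists_range_subset_periodicPts_eq_empty hX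
  obtain ⟨y, -, n, hn, hy⟩ :=
    h𝓑 B hB f f.continuous ((image_subset_range _ _).trans (hfS.trans hSB))
  exact (hf ▸ mk_mem_periodicPts hn hy : y ∈ (∅ : Set X))

end SimpleClosedCurve

theorem stmt_13_general {X : Type*} [MetricSpace X] [LocallyCompactSpace X]
    [LocallyConnectedSpace X] (hdim : CoveringDimLE X 1) (h : HasWLPPP X) :
    IsLocalDendrite X := by
  intro x
  obtain ⟨B, hB, h_no_curve⟩ := h.exists_mem_nhds_forall_not_isSimpleClosedCurve hdim x
  obtain ⟨N, hN, hNB, hN_closed, hN_compact, hN_conn, hN_lc⟩ :=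
    exists_mem_nhds_isCompact_isConnected_locallyConnectedSpace hB
  exact ⟨N, hN, hN_closed, hN_compact, hN_conn, hN_lc, fun S hS => h_no_curve S (hS.trans hNB)⟩

/-- A locally connected one-dimensional metric continuum with the weak local periodic point
property is a local dendrite. -/
theorem stmt_13 {X : Type*} [MetricSpace X] [CompactSpace X] [ConnectedSpace X] [Nonempty X]
    [LocallyConnectedSpace X]
    (hdim : CoveringDimLE X 1 ∧ ¬ CoveringDimLE X 0)
    (h : HasWLPPP X) : IsLocalDendrite X :=
  stmt_13_general hdim.1 h
end
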